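/- arXiv:1902.07426 — 2 statements merged into one kernel-verified Lean document; each statement's English description precedes it below -/
import Mathlib

section
/- There is a universal constant C > 0 such that the following holds. Let n ≥ 16, let μ be a product probability measure on {0,1}^n, let ε ∈ (0,1/2], and let f : {0,1}^n → {0,1}. Then there exist a value b ∈ {0,1} and a set S ⊆ [n] with |S| ≤ C·( log(1/ε)·n/(ε·log n) + n·log log n/(ε·log n) ) such that I_S^b(f) ≥ 1 − ε. (In other words, no single-round Boolean coin-flipping protocol over any product measure is ε-resilient against all coalitions of this size.) -/
open MeasureTheory

/-- Influence of coalition `S` towards value `b`: the probability over `x ∼ μ` that `x` can be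
modified on the coordinates in `S` to obtain `y` with `f y = b`. -/
noncomputable def infl {ι : Type*} {α : Type*} (μ : Measure (ι → Bool))
    (f : (ι → Bool) → α) (S : Finset ι) (b : α) : ℝ :=
  (μ {x | ∃ y, (∀ j ∉ S, y j = x j) ∧ f y = b}).toReal

/-!
For `b : Bool` let `F_b` be the set of points at which the coalition `S` cannot prevent the value
`b`. These two sets are disjoint, and a new member `k` of `S` removes from each of them exactly its
boundary in direction `k`. So it suffices to show that two disjoint sets of probabilities `a` and
`b` have, in some common direction, boundaries of total probability at least `a b log n / (100 n)`:
as long as both probabilities exceed `ε`, a greedy choice of the new member then shrinks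
`Pr F_true + Pr F_false` by a factor `1 - ε log n / (200 n)`.

For the indicators `f`, `g` of two disjoint sets, the noise form `⟨f, T_r g⟩` is `E f * E g` at
noise rate `r = 0` and vanishes at `r = 1`. Its derivative in the rate of the bit `k` is
`v ⟨D_k f, T_r D_k g⟩` with `v` the variance of the bit. Splitting `D_k f` and `D_k g` into
indicators of pivotal events, only the mixed terms can be negative, and if all boundaries are at
most `θ` then small-set expansion bounds them by `v ^ (1/4) θ ^ (1 + s)`, with `s` depending on the
rate. Along a dyadic scale of rates tending to `1` these bounds sum to `O(n θ / log (1/θ))`, which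
therefore dominates `E f * E g`.
-/

namespace BiasedCube

open Finset Function unitInterval

noncomputable section

/-! ### The biased bit -/

/-- The point masses of the Bernoulli law on `Bool` that gives `true` probability `q`. -/
def weight (q : I) : Bool → ℝ
  | true => q
  | false => 1 - q

/-- The variance of the Bernoulli law with parameter `q`. -/
def variance (q : I) : ℝ := q * (1 - q)

/-- The centred and normalised function on the biased bit, which spans the Fourier basis together
with the constants. It is zero when `q` is `0` or `1`, where no normalisation exists. -/
def stdBit (q : I) : Bool → ℝ
  | true => √(variance q) / q
  | false => -(√(variance q) / (1 - q))

section Bit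

variable (q : I)

lemma weight_nonneg (b : Bool) : 0 ≤ weight q b := by
  cases b
  exacts [unitInterval.one_minus_nonneg q, q.2.1]

lemma sum_weight : ∑ b, weight q b = 1 := by
  simp [weight]

lemma variance_nonneg : 0 ≤ variance q :=
  mul_nonneg q.2.1 (unitInterval.one_minus_nonneg q)

lemma variance_le_one_fourth : variance q ≤ 1 / 4 := by
  unfold variance
  linarith [sq_nonneg ((q : ℝ) - 1 / 2)]

lemma variance_eq_weight_mul_weight (b : Bool) :
    variance q = weight q b * weight q (!b) := by
  cases b <;> simp only [variance, weight, Bool.not_true, Bool.not_false, mul_comm]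

lemma weight_mul_stdBit_true : weight q true * stdBit q true = √(variance q) :=
  mul_div_cancel_of_imp' fun h : (q : ℝ) = 0 => by simp [variance, h]

lemma weight_mul_stdBit_false : weight q false * stdBit q false = -√(variance q) := by
  simp only [weight, stdBit, mul_neg, neg_inj]
  exact mul_div_cancel_of_imp' fun h => by simp [variance, h]

lemma sum_weight_mul_stdBit : ∑ b, weight q b * stdBit q b = 0 := by
  rw [Fintype.sum_bool, weight_mul_stdBit_true, weight_mul_stdBit_false, add_neg_cancel]

lemma weight_mul_stdBit_sq_le (b : Bool) : weight q b * stdBit q b ^ 2 ≤ weight q (!b) := by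
  have hsq : (weight q b * stdBit q b) ^ 2 = variance q := by
    cases b <;> simp only [weight_mul_stdBit_true, weight_mul_stdBit_false, neg_sq,
      Real.sq_sqrt (variance_nonneg q)]
  rcases (weight_nonneg q b).eq_or_lt with h | h
  · rw [← h, zero_mul]
    exact weight_nonneg q _
  · rw [variance_eq_weight_mul_weight q b] at hsq
    refine le_of_mul_le_mul_left (le_of_eq ?_) h
    linear_combination hsq

lemma sum_weight_mul_stdBit_sq_le : ∑ b, weight q b * stdBit q b ^ 2 ≤ 1 := by
  rw [Fintype.sum_bool, ← sum_weight q, Fintype.sum_bool, add_comm]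
  exact add_le_add (weight_mul_stdBit_sq_le q false) (weight_mul_stdBit_sq_le q true)

lemma variance_mul_sum_weight_mul_stdBit_pow_four_le :
    variance q * ∑ b, weight q b * stdBit q b ^ 4 ≤ 1 := by
  have hterm (b : Bool) : variance q * (weight q b * stdBit q b ^ 4) ≤ weight q (!b) := by
    have h0 := weight_nonneg q b
    have h1 := weight_nonneg q (!b)
    have hle : weight q (!b) ≤ 1 := by
      cases b
      exacts [q.2.2, unitInterval.one_minus_le_one q]
    calc variance q * (weight q b * stdBit q b ^ 4)
        = weight q (!b) * (weight q b * stdBit q b ^ 2) ^ 2 := by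
          rw [variance_eq_weight_mul_weight q b]; ring
      _ ≤ weight q (!b) * weight q (!b) ^ 2 := by
          gcongr
          exact weight_mul_stdBit_sq_le q b
      _ ≤ weight q (!b) := mul_le_of_le_one_right h1 (pow_le_one₀ h1 hle)
  rw [Fintype.sum_bool, mul_add, ← sum_weight q, Fintype.sum_bool, add_comm]
  exact add_le_add (hterm false) (hterm true)

variable {q}

lemma sum_weight_mul_pow_four_le {r : ℝ} (hr : 4 * r ^ 4 ≤ variance q) (A D : ℝ) :
    ∑ b, weight q b * (A + r * stdBit q b * D) ^ 4 ≤ (A ^ 2 + D ^ 2) ^ 2 := by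
  have hquartic (t : ℝ) : (A + t * D) ^ 4 ≤
      A ^ 4 + 4 * A ^ 3 * (t * D) + 8 * A ^ 2 * (t * D) ^ 2 + 3 * (t * D) ^ 4 := by
    linarith [mul_nonneg (sq_nonneg (t * D)) (sq_nonneg (A - t * D))]
  have hr2 : 8 * r ^ 2 ≤ 2 := by
    have := variance_le_one_fourth q
    linarith [abs_le_of_sq_le_sq' (show (r ^ 2) ^ 2 ≤ (1 / 4 : ℝ) ^ 2 by linarith) (by norm_num)]
  have hsecond : 8 * r ^ 2 * ∑ b, weight q b * stdBit q b ^ 2 ≤ 2 :=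
    (mul_le_of_le_one_right (by positivity) (sum_weight_mul_stdBit_sq_le q)).trans hr2
  have hfourth : 3 * r ^ 4 * ∑ b, weight q b * stdBit q b ^ 4 ≤ 1 := by
    have hnonneg : 0 ≤ ∑ b, weight q b * stdBit q b ^ 4 :=
      sum_nonneg fun b _ => mul_nonneg (weight_nonneg q b) (by positivity)
    linarith [mul_le_mul_of_nonneg_right hr hnonneg,
      variance_mul_sum_weight_mul_stdBit_pow_four_le q]
  calc ∑ b, weight q b * (A + r * stdBit q b * D) ^ 4
      ≤ ∑ b, weight q b * (A ^ 4 + 4 * A ^ 3 * (r * stdBit q b * D)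
          + 8 * A ^ 2 * (r * stdBit q b * D) ^ 2 + 3 * (r * stdBit q b * D) ^ 4) :=
        sum_le_sum fun b _ => mul_le_mul_of_nonneg_left (hquartic _) (weight_nonneg q b)
    _ = A ^ 4 * (∑ b, weight q b) + 4 * A ^ 3 * D * r * (∑ b, weight q b * stdBit q b)
          + 8 * r ^ 2 * (∑ b, weight q b * stdBit q b ^ 2) * (A ^ 2 * D ^ 2)
          + 3 * r ^ 4 * (∑ b, weight q b * stdBit q b ^ 4) * D ^ 4 := by
        simp only [Fintype.sum_bool]; ring
    _ ≤ A ^ 4 * 1 + 4 * A ^ 3 * D * r * 0 + 2 * (A ^ 2 * D ^ 2) + 1 * D ^ 4 := by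
        rw [sum_weight, sum_weight_mul_stdBit]
        gcongr
    _ = (A ^ 2 + D ^ 2) ^ 2 := by ring

end Bit

/-! ### Noise rates -/

/-- The noise rate from which the dyadic scale of rates starts. It is chosen so that `√(baseRate q)`
is small enough a damping factor for `sum_weight_mul_pow_four_le`. -/
def baseRate (q : I) : ℝ := √(variance q) / 4

/-- The `j`-th noise rate. Each rate is the square root of the previous one, so that the gain in the
small-set exponent halves from one to the next. -/
def dyadicRate (q : I) (j : ℕ) : ℝ := baseRate q ^ ((1 / 2 : ℝ) ^ j)

-- `1 - w ^ x ≤ -x log w`, and `-√w log w` is bounded.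
lemma one_sub_rpow_mul_sqrt_le {w x : ℝ} (hw : 0 ≤ w) (hx : 0 ≤ x) :
    (1 - w ^ x) * √w ≤ 2 * x := by
  rcases hw.eq_or_lt with rfl | hw
  · rw [Real.sqrt_zero, mul_zero]
    positivity
  have hs : 0 < √w := Real.sqrt_pos.2 hw
  have hpow : 1 - w ^ x ≤ x * (2 * -Real.log √w) := by
    have := Real.add_one_le_exp (Real.log w * x)
    rw [Real.rpow_def_of_pos hw, Real.log_sqrt hw.le]
    linarith
  have hlog : -Real.log √w * √w ≤ 1 := by
    have h := mul_le_mul_of_nonneg_right (Real.one_sub_inv_le_log_of_pos hs) hs.le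
    rw [sub_mul, inv_mul_cancel₀ hs.ne'] at h
    linarith
  calc (1 - w ^ x) * √w ≤ x * (2 * -Real.log √w) * √w := by gcongr
    _ = 2 * x * (-Real.log √w * √w) := by ring
    _ ≤ 2 * x * 1 := by gcongr
    _ = 2 * x := mul_one _

section Rate

variable (q : I) (j : ℕ)

lemma baseRate_nonneg : 0 ≤ baseRate q := div_nonneg (Real.sqrt_nonneg _) (by norm_num)

lemma baseRate_le_one : baseRate q ≤ 1 := by
  have : √(variance q) ≤ 1 :=
    Real.sqrt_le_one.2 ((variance_le_one_fourth q).trans (by norm_num))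
  unfold baseRate
  linarith

lemma four_mul_sqrt_baseRate_pow_four_le : 4 * √(baseRate q) ^ 4 ≤ variance q := by
  have hfourth : √(baseRate q) ^ 4 = variance q / 16 := by
    rw [show 4 = 2 * 2 from rfl, pow_mul, Real.sq_sqrt (baseRate_nonneg q), baseRate, div_pow,
      Real.sq_sqrt (variance_nonneg q)]
    norm_num
  linarith [variance_nonneg q]

lemma variance_rpow_one_fourth : variance q ^ (1 / 4 : ℝ) = 2 * √(baseRate q) := by
  have hfour : √(4 : ℝ) = 2 := by
    rw [show (4 : ℝ) = 2 ^ 2 by norm_num, Real.sqrt_sq zero_le_two]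
  rw [baseRate, Real.sqrt_div (Real.sqrt_nonneg _), hfour, mul_div_cancel₀ _ two_ne_zero,
    Real.sqrt_eq_rpow, Real.sqrt_eq_rpow, ← Real.rpow_mul (variance_nonneg q)]
  norm_num

lemma dyadicRate_nonneg : 0 ≤ dyadicRate q j := Real.rpow_nonneg (baseRate_nonneg q) _

lemma dyadicRate_le_one : dyadicRate q j ≤ 1 :=
  Real.rpow_le_one (baseRate_nonneg q) (baseRate_le_one q) (by positivity)

lemma dyadicRate_succ_sq : dyadicRate q (j + 1) ^ 2 = dyadicRate q j := by
  rw [dyadicRate, ← Real.rpow_mul_natCast (baseRate_nonneg q), dyadicRate]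
  congr 1
  push_cast
  ring

lemma dyadicRate_le_succ : dyadicRate q j ≤ dyadicRate q (j + 1) := by
  rw [← dyadicRate_succ_sq]
  exact pow_le_of_le_one (dyadicRate_nonneg q _) (dyadicRate_le_one q _) two_ne_zero

lemma one_sub_dyadicRate_mul_variance_rpow_le :
    (1 - dyadicRate q j) * variance q ^ (1 / 4 : ℝ) ≤ 4 * (1 / 2) ^ j := by
  have h := one_sub_rpow_mul_sqrt_le (baseRate_nonneg q)
    (show (0 : ℝ) ≤ (1 / 2) ^ j by positivity)
  rw [variance_rpow_one_fourth, dyadicRate]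
  linarith

end Rate

/-! ### Characters -/

section Character

variable {ι : Type*}

/-- The element of the Fourier basis of the biased cube that is indexed by `S`. -/
def character (p : ι → I) (S : Finset ι) (x : ι → Bool) : ℝ := ∏ j ∈ S, stdBit (p j) (x j)

/-- The Fourier expansion with coefficients `a S` supported on subsets of `s`, after the noise that
damps the coordinate `j` by the factor `r j`. -/
def dampedSum (p : ι → I) (r : ι → ℝ) (s : Finset ι) (a : Finset ι → ℝ) : (ι → Bool) → ℝ :=
  ∑ S ∈ s.powerset, ((∏ j ∈ S, r j) * a S) • character p S

variable [DecidableEq ι] {p : ι → I}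

lemma character_insert {S : Finset ι} {k : ι} (hk : k ∉ S) (x : ι → Bool) :
    character p (insert k S) x = stdBit (p k) (x k) * character p S x :=
  prod_insert hk

lemma character_update_of_notMem {S : Finset ι} {k : ι} (hk : k ∉ S) (x : ι → Bool) (b : Bool) :
    character p S (update x k b) = character p S x :=
  prod_congr rfl fun j hj => by rw [update_of_ne (ne_of_mem_of_not_mem hj hk)]

variable {r : ι → ℝ} {s : Finset ι} {k : ι}

lemma dampedSum_update_of_notMem (hk : k ∉ s) (a : Finset ι → ℝ) (x : ι → Bool) (b : Bool) :
    dampedSum p r s a (update x k b) = dampedSum p r s a x := by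
  simp only [dampedSum, Finset.sum_apply, Pi.smul_apply]
  exact sum_congr rfl fun S hS => by
    rw [character_update_of_notMem (notMem_of_mem_powerset_of_notMem hS hk)]

lemma dampedSum_insert (hk : k ∉ s) (a : Finset ι → ℝ) (x : ι → Bool) :
    dampedSum p r (insert k s) a x = dampedSum p r s a x
      + r k * stdBit (p k) (x k) * dampedSum p r s (fun S => a (insert k S)) x := by
  simp only [dampedSum, Finset.sum_apply, Pi.smul_apply, smul_eq_mul, sum_powerset_insert hk,
    mul_sum]
  congr 1
  refine sum_congr rfl fun S hS => ?_
  have hkS := notMem_of_mem_powerset_of_notMem hS hk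
  rw [prod_insert hkS, character_insert hkS]
  ring

end Character

/-! ### Pivotal bits -/

section Pivotal

variable {ι : Type*} [DecidableEq ι]

/-- The change of `f` when the bit `k` is switched from `false` to `true`. -/
def discreteDeriv (k : ι) (f : (ι → Bool) → ℝ) (x : ι → Bool) : ℝ :=
  f (update x k true) - f (update x k false)

lemma discreteDeriv_discreteDeriv (k : ι) (f : (ι → Bool) → ℝ) :
    discreteDeriv k (discreteDeriv k f) = 0 := by
  ext x
  simp [discreteDeriv]

/-- The event, as a `{0, 1}`-valued function, that setting the bit `k` to `b` puts the point in the
set with indicator function `f` while setting it to `!b` keeps it out. -/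
def pivotalAt (k : ι) (b : Bool) (f : (ι → Bool) → ℝ) (x : ι → Bool) : ℝ :=
  f (update x k b) * (1 - f (update x k !b))

lemma isIdempotentElem_pivotalAt {f : (ι → Bool) → ℝ} (hf : IsIdempotentElem f) (k : ι)
    (b : Bool) : IsIdempotentElem (pivotalAt k b f) := by
  have hpoint (x : ι → Bool) : IsIdempotentElem (f x) := congrFun hf x
  exact funext fun x => (hpoint _).mul (hpoint _).one_sub

lemma discreteDeriv_eq_pivotalAt_sub (k : ι) (f : (ι → Bool) → ℝ) :
    discreteDeriv k f = pivotalAt k true f - pivotalAt k false f := by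
  ext x
  simp only [discreteDeriv, pivotalAt, Pi.sub_apply, Bool.not_true, Bool.not_false]
  ring

end Pivotal

/-! ### Forced values -/

section Forced

variable {ι α : Type*} {f : (ι → Bool) → α} {S : Finset ι} {k : ι} {b b' : α}

/-- The points at which the coalition `S` cannot prevent the value `b`. -/
def forcedSet (f : (ι → Bool) → α) (S : Finset ι) (b : α) : Set (ι → Bool) :=
  {x | ∀ y, (∀ j ∉ S, y j = x j) → f y = b}

/-- The indicator function of `forcedSet f S b`. -/
def forced (f : (ι → Bool) → α) (S : Finset ι) (b : α) : (ι → Bool) → ℝ :=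
  (forcedSet f S b).indicator 1

lemma isIdempotentElem_forced (f : (ι → Bool) → α) (S : Finset ι) (b : α) :
    IsIdempotentElem (forced f S b) := by
  rw [IsIdempotentElem, forced, ← Set.inter_indicator_one, Set.inter_self]

lemma forced_mul_forced (hb : b ≠ b') : forced f S b * forced f S b' = 0 := by
  have hdisj : Disjoint (forcedSet f S b) (forcedSet f S b') :=
    Set.disjoint_left.2 fun x hx hx' =>
      hb ((hx x fun _ _ => rfl).symm.trans (hx' x fun _ _ => rfl))
  rw [forced, forced, ← Set.inter_indicator_one, hdisj.inter_eq, Set.indicator_empty]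
  rfl

variable [DecidableEq ι]

lemma mem_forcedSet_insert {x : ι → Bool} :
    x ∈ forcedSet f (insert k S) b ↔
      x ∈ forcedSet f S b ∧ update x k (!x k) ∈ forcedSet f S b := by
  refine ⟨fun h => ⟨fun y hy => h y fun j hj => hy j fun hjS => hj (mem_insert_of_mem hjS),
    fun y hy => h y fun j hj => ?_⟩, fun ⟨hx, hflip⟩ y hy => ?_⟩
  · rw [hy j fun hjS => hj (mem_insert_of_mem hjS),
      update_of_ne fun hjk : j = k => hj (hjk ▸ mem_insert_self j S)]
  · have hagree {z : ι → Bool} (hk : y k = z k) (hz : ∀ j ≠ k, z j = x j) (j : ι) (hj : j ∉ S) :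
        y j = z j := by
      rcases eq_or_ne j k with rfl | hjk
      · exact hk
      · rw [hz j hjk, hy j fun h => (mem_insert.1 h).elim hjk hj]
    rcases Bool.eq_or_eq_not (y k) (x k) with hk | hk
    · exact hx y (hagree hk fun _ _ => rfl)
    · exact hflip y (hagree (by rw [hk, update_self]) fun j hj => update_of_ne hj _ _)

lemma forced_insert (x : ι → Bool) :
    forced f (insert k S) b x = forced f S b x * forced f S b (update x k !x k) := by
  classical
  simp only [forced, Set.indicator_apply, mem_forcedSet_insert, Pi.one_apply, ite_and, mul_ite,
    mul_one, mul_zero]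
  split_ifs <;> rfl

end Forced

/-! ### Expectation over the biased cube -/

section Indicator

variable {α : Type*} {u : α → ℝ}

-- The functions with values in `{0, 1}` are the idempotents of `α → ℝ`.
lemma nonneg_of_isIdempotentElem (hu : IsIdempotentElem u) : 0 ≤ u := fun x => by
  rw [← hu.eq]
  exact mul_self_nonneg (u x)

lemma le_one_of_isIdempotentElem (hu : IsIdempotentElem u) : u ≤ 1 :=
  sub_nonneg.1 (nonneg_of_isIdempotentElem hu.one_sub)

end Indicator

variable {ι : Type*} [Fintype ι]

/-- The point masses of the product of the Bernoulli laws with parameters `p`. -/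
def prob (p : ι → I) (x : ι → Bool) : ℝ := ∏ j, weight (p j) (x j)

lemma prob_nonneg (p : ι → I) (x : ι → Bool) : 0 ≤ prob p x :=
  prod_nonneg fun j _ => weight_nonneg (p j) (x j)

variable [DecidableEq ι]

/-- Expectation under the product of the Bernoulli laws with parameters `p`. -/
def expect (p : ι → I) : ((ι → Bool) → ℝ) →ₗ[ℝ] ℝ := ∑ x, prob p x • LinearMap.proj x

variable {p : ι → I}

lemma expect_apply (F : (ι → Bool) → ℝ) : expect p F = ∑ x, prob p x * F x := by
  simp [expect]

lemma expect_mono {F G : (ι → Bool) → ℝ} (h : F ≤ G) : expect p F ≤ expect p G := by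
  simp only [expect_apply]
  exact sum_le_sum fun x _ => mul_le_mul_of_nonneg_left (h x) (prob_nonneg p x)

lemma expect_nonneg {F : (ι → Bool) → ℝ} (h : 0 ≤ F) : 0 ≤ expect p F :=
  (map_zero (expect p)).symm.trans_le (expect_mono h)

lemma expect_one : expect p 1 = 1 := by
  simp only [expect_apply, prob, Pi.one_apply, mul_one]
  rw [← Fintype.prod_sum]
  exact prod_eq_one fun j _ => sum_weight (p j)

lemma expect_mul_sq_le (F G : (ι → Bool) → ℝ) :
    expect p (F * G) ^ 2 ≤ expect p (F ^ 2) * expect p (G ^ 2) := by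
  simp only [expect_apply, Pi.mul_apply, Pi.pow_apply]
  refine sum_sq_le_sum_mul_sum_of_sq_le_mul _ (fun x _ => ?_) (fun x _ => ?_) fun x _ =>
    le_of_eq (by ring)
  all_goals exact mul_nonneg (prob_nonneg p x) (sq_nonneg _)

lemma prob_update_mul_weight (x : ι → Bool) (k : ι) (b : Bool) :
    prob p (update x k b) * weight (p k) (x k) = prob p x * weight (p k) b := by
  have herase : ∏ j ∈ univ.erase k, weight (p j) (update x k b j)
      = ∏ j ∈ univ.erase k, weight (p j) (x j) :=
    prod_congr rfl fun j hj => by rw [update_of_ne (ne_of_mem_erase hj)]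
  unfold prob
  rw [← mul_prod_erase univ _ (mem_univ k),
    ← mul_prod_erase univ (fun j => weight (p j) (x j)) (mem_univ k), herase, update_self]
  ring

-- Swapping the bit `x k` with an independent copy `b` of it preserves the joint law.
lemma expect_resample (k : ι) (F : (ι → Bool) → ℝ) :
    expect p (fun x => ∑ b, weight (p k) b * F (update x k b)) = expect p F := by
  let swap : (ι → Bool) × Bool → (ι → Bool) × Bool := fun z => (update z.1 k z.2, z.1 k)
  have hswap : Involutive swap := fun ⟨x, b⟩ => by simp [swap]
  calc expect p (fun x => ∑ b, weight (p k) b * F (update x k b))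
      = ∑ z : (ι → Bool) × Bool, prob p z.1 * weight (p k) z.2 * F (swap z).1 := by
        simp only [expect_apply, mul_sum, Fintype.sum_prod_type, swap, mul_assoc]
    _ = ∑ z : (ι → Bool) × Bool, prob p z.1 * weight (p k) z.2 * F z.1 := by
        rw [← Equiv.sum_comp hswap.toPerm]
        refine sum_congr rfl fun ⟨x, b⟩ _ => ?_
        simp [swap, prob_update_mul_weight]
    _ = expect p F := by
        simp only [expect_apply, Fintype.sum_prod_type]
        refine sum_congr rfl fun x _ => ?_
        rw [← sum_mul, ← mul_sum, sum_weight, mul_one]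

section Idempotent

variable {u : (ι → Bool) → ℝ}

lemma expect_idempotent_nonneg (hu : IsIdempotentElem u) : 0 ≤ expect p u :=
  expect_nonneg (nonneg_of_isIdempotentElem hu)

lemma expect_idempotent_le_one (hu : IsIdempotentElem u) : expect p u ≤ 1 :=
  (expect_mono (le_one_of_isIdempotentElem hu)).trans_eq expect_one

lemma expect_idempotent_mul_pow_four_le (hu : IsIdempotentElem u) (F : (ι → Bool) → ℝ) :
    expect p (u * F) ^ 4 ≤ expect p u ^ 3 * expect p (F ^ 4) := by
  have hu2 : u ^ 2 = u := (sq u).trans hu.eq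
  have hfirst : expect p (u * F) ^ 2 ≤ expect p u * expect p (u * F ^ 2) := by
    have h := expect_mul_sq_le (p := p) u (u * F)
    rwa [← mul_assoc, hu.eq, mul_pow, hu2] at h
  have hsecond : expect p (u * F ^ 2) ^ 2 ≤ expect p u * expect p (F ^ 4) := by
    have h := expect_mul_sq_le (p := p) u (F ^ 2)
    rwa [hu2, ← pow_mul] at h
  have : 0 ≤ expect p u := expect_idempotent_nonneg hu
  calc expect p (u * F) ^ 4 = (expect p (u * F) ^ 2) ^ 2 := by ring
    _ ≤ (expect p u * expect p (u * F ^ 2)) ^ 2 := by gcongr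
    _ = expect p u ^ 2 * expect p (u * F ^ 2) ^ 2 := by ring
    _ ≤ expect p u ^ 2 * (expect p u * expect p (F ^ 4)) := by gcongr
    _ = expect p u ^ 3 * expect p (F ^ 4) := by ring

end Idempotent

/-! ### Fourier expansion and hypercontractivity -/

section DampedSum

variable {r : ι → ℝ} {s : Finset ι} {k : ι}

lemma expect_dampedSum_insert_pow_four_le (hk : k ∉ s) (hr : 4 * r k ^ 4 ≤ variance (p k))
    (a : Finset ι → ℝ) :
    expect p (dampedSum p r (insert k s) a ^ 4) ≤
      expect p ((dampedSum p r s a ^ 2 + dampedSum p r s (fun S => a (insert k S)) ^ 2) ^ 2) := by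
  rw [← expect_resample k]
  refine expect_mono fun x => ?_
  simp only [Pi.pow_apply, Pi.add_apply, dampedSum_insert hk, dampedSum_update_of_notMem hk,
    update_self]
  exact sum_weight_mul_pow_four_le hr _ _

-- Minkowski's inequality in `L²` for `F ^ 2` and `G ^ 2`.
lemma expect_add_sq_sq_le {F G : (ι → Bool) → ℝ} {α β : ℝ} (hα : 0 ≤ α) (hβ : 0 ≤ β)
    (hF : expect p (F ^ 4) ≤ α ^ 2) (hG : expect p (G ^ 4) ≤ β ^ 2) :
    expect p ((F ^ 2 + G ^ 2) ^ 2) ≤ (α + β) ^ 2 := by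
  have hcross : expect p (F ^ 2 * G ^ 2) ≤ α * β := by
    refine le_of_sq_le_sq ?_ (mul_nonneg hα hβ)
    calc expect p (F ^ 2 * G ^ 2) ^ 2 ≤ expect p (F ^ 4) * expect p (G ^ 4) := by
          have h := expect_mul_sq_le (p := p) (F ^ 2) (G ^ 2)
          rwa [← pow_mul, ← pow_mul] at h
      _ ≤ α ^ 2 * β ^ 2 :=
          mul_le_mul hF hG (expect_nonneg fun x => Even.pow_nonneg (by decide) (G x)) (sq_nonneg α)
      _ = (α * β) ^ 2 := (mul_pow α β 2).symm
  calc expect p ((F ^ 2 + G ^ 2) ^ 2)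
      = expect p (F ^ 4) + 2 * expect p (F ^ 2 * G ^ 2) + expect p (G ^ 4) := by
        rw [← smul_eq_mul, ← map_smul, ← map_add, ← map_add]
        congr 1
        ext x
        simp only [Pi.add_apply, Pi.mul_apply, Pi.pow_apply, Pi.smul_apply, smul_eq_mul]
        ring
    _ ≤ α ^ 2 + 2 * (α * β) + β ^ 2 := by gcongr
    _ = (α + β) ^ 2 := by ring

lemma expect_dampedSum_pow_four_le (hr : ∀ j, 4 * r j ^ 4 ≤ variance (p j)) (s : Finset ι)
    (a : Finset ι → ℝ) :
    expect p (dampedSum p r s a ^ 4) ≤ (∑ S ∈ s.powerset, a S ^ 2) ^ 2 := by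
  induction s using Finset.induction_on generalizing a with
  | empty =>
    have hconst : dampedSum p r ∅ a ^ 4 = a ∅ ^ 4 • (1 : (ι → Bool) → ℝ) := by
      ext x
      simp [dampedSum, character]
    rw [hconst, map_smul, expect_one, powerset_empty, sum_singleton, ← pow_mul, smul_eq_mul,
      mul_one]
  | insert k s hk ih =>
    rw [sum_powerset_insert hk]
    exact (expect_dampedSum_insert_pow_four_le hk (hr k) a).trans
      (expect_add_sq_sq_le (sum_nonneg fun _ _ => sq_nonneg _) (sum_nonneg fun _ _ => sq_nonneg _)
        (ih a) (ih _))

end DampedSum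

/-- The Fourier coefficient of a function at the character indexed by `S`. -/
def fourierCoeff (p : ι → I) (S : Finset ι) : ((ι → Bool) → ℝ) →ₗ[ℝ] ℝ :=
  expect p ∘ₗ LinearMap.mulRight ℝ (character p S)

lemma fourierCoeff_apply (S : Finset ι) (f : (ι → Bool) → ℝ) :
    fourierCoeff p S f = expect p (f * character p S) :=
  rfl

lemma fourierCoeff_insert {S : Finset ι} {k : ι} (hk : k ∉ S) (f : (ι → Bool) → ℝ) :
    fourierCoeff p (insert k S) f = √(variance (p k)) * fourierCoeff p S (discreteDeriv k f) := by
  rw [fourierCoeff_apply, fourierCoeff_apply, ← expect_resample k,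
    ← smul_eq_mul (√(variance (p k))), ← map_smul]
  congr 1
  ext x
  simp only [Pi.mul_apply, Pi.smul_apply, smul_eq_mul, Fintype.sum_bool, character_insert hk,
    character_update_of_notMem hk, update_self, discreteDeriv]
  linear_combination f (update x k true) * character p S x * weight_mul_stdBit_true (p k)
    + f (update x k false) * character p S x * weight_mul_stdBit_false (p k)

/-! ### The noise form -/

/-- The bilinear form `⟨f, T_r g⟩`, where the noise operator `T_r` keeps the bit `j` with
probability `r j` and resamples it otherwise, written in the Fourier basis. -/
def noiseForm (p : ι → I) (r : ι → ℝ) (f g : (ι → Bool) → ℝ) : ℝ :=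
  ∑ S : Finset ι, (∏ j ∈ S, r j) * (fourierCoeff p S f * fourierCoeff p S g)

/-- The joint law of a bit `a` and its noisy copy `b`, which agrees with `a` with probability `t`
and is otherwise independent of it. -/
def noiseKernel (q : I) (t : ℝ) (a b : Bool) : ℝ :=
  weight q a * weight q b * (1 + t * (stdBit q a * stdBit q b))

lemma noiseKernel_one (q : I) (a b : Bool) :
    noiseKernel q 1 a b = if a = b then weight q a else 0 := by
  have hsq : √(variance q) ^ 2 = q * (1 - q) := Real.sq_sqrt (variance_nonneg q)
  have hexpand : noiseKernel q 1 a b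
      = weight q a * weight q b + (weight q a * stdBit q a) * (weight q b * stdBit q b) := by
    rw [noiseKernel]; ring
  rw [hexpand]
  cases a <;> cases b <;>
    simp only [weight_mul_stdBit_true, weight_mul_stdBit_false, reduceIte, reduceCtorEq] <;>
    simp only [weight] <;> linarith

lemma noiseKernel_nonneg (q : I) {t : ℝ} (ht0 : 0 ≤ t) (ht1 : t ≤ 1) (a b : Bool) :
    0 ≤ noiseKernel q t a b := by
  have hconvex : noiseKernel q t a b
      = (1 - t) * (weight q a * weight q b) + t * noiseKernel q 1 a b := by
    simp only [noiseKernel]; ring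
  have hone : 0 ≤ noiseKernel q 1 a b := by
    rw [noiseKernel_one]
    split_ifs
    exacts [weight_nonneg q a, le_rfl]
  rw [hconvex]
  exact add_nonneg (mul_nonneg (sub_nonneg.2 ht1)
    (mul_nonneg (weight_nonneg q a) (weight_nonneg q b))) (mul_nonneg ht0 hone)

lemma noiseForm_eq_sum_noiseKernel (r : ι → ℝ) (f g : (ι → Bool) → ℝ) :
    noiseForm p r f g =
      ∑ x, ∑ y, (∏ j, noiseKernel (p j) (r j) (x j) (y j)) * (f x * g y) := by
  have hkernel (x y : ι → Bool) : ∏ j, noiseKernel (p j) (r j) (x j) (y j)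
      = ∑ S : Finset ι, (∏ j ∈ S, r j) * ((prob p x * character p S x)
          * (prob p y * character p S y)) := by
    simp only [noiseKernel]
    rw [prod_mul_distrib, prod_mul_distrib, prod_one_add, powerset_univ, mul_sum]
    refine sum_congr rfl fun S _ => ?_
    rw [prod_mul_distrib, prod_mul_distrib]
    unfold prob character
    ring
  calc noiseForm p r f g
      = ∑ S : Finset ι, ∑ x, ∑ y, (∏ j ∈ S, r j) * ((prob p x * character p S x)
          * (prob p y * character p S y)) * (f x * g y) := by
        refine sum_congr rfl fun S _ => ?_
        simp only [fourierCoeff_apply, expect_apply, Pi.mul_apply]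
        rw [sum_mul_sum, mul_sum]
        refine sum_congr rfl fun x _ => ?_
        rw [mul_sum]
        exact sum_congr rfl fun y _ => by ring
    _ = ∑ x, ∑ y, ∑ S : Finset ι, (∏ j ∈ S, r j) * ((prob p x * character p S x)
          * (prob p y * character p S y)) * (f x * g y) := by
        rw [sum_comm]
        exact sum_congr rfl fun x _ => sum_comm
    _ = _ := by simp only [hkernel, sum_mul]

lemma noiseForm_one (f g : (ι → Bool) → ℝ) : noiseForm p 1 f g = expect p (f * g) := by
  rw [noiseForm_eq_sum_noiseKernel, expect_apply]
  refine sum_congr rfl fun x _ => ?_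
  have hdiag (y : ι → Bool) :
      ∏ j, noiseKernel (p j) 1 (x j) (y j) = if x = y then prob p x else 0 := by
    simp only [noiseKernel_one, prob, prod_ite_zero, mem_univ, true_imp_iff, funext_iff]
  simp only [Pi.one_apply, hdiag, ite_mul, zero_mul, sum_ite_eq, mem_univ, if_true, Pi.mul_apply]

lemma noiseForm_zero (f g : (ι → Bool) → ℝ) : noiseForm p 0 f g = expect p f * expect p g := by
  have hempty : character p ∅ = 1 := rfl
  unfold noiseForm
  rw [sum_eq_single ∅ (fun S _ hS => ?_) (by simp), prod_empty, one_mul]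
  · simp only [fourierCoeff_apply, hempty, mul_one]
  · obtain ⟨j, hj⟩ := nonempty_iff_ne_empty.2 hS
    rw [prod_eq_zero hj rfl, zero_mul]

lemma noiseForm_sub_sub (r : ι → ℝ) (f f' g g' : (ι → Bool) → ℝ) :
    noiseForm p r (f - f') (g - g')
      = noiseForm p r f g - noiseForm p r f g' - noiseForm p r f' g + noiseForm p r f' g' := by
  simp only [noiseForm, map_sub, ← sum_sub_distrib, ← sum_add_distrib]
  exact sum_congr rfl fun S _ => by ring

section NoiseForm

variable {r ρ : ι → ℝ}

lemma noiseForm_nonneg (hr0 : 0 ≤ r) (hr1 : r ≤ 1) {f g : (ι → Bool) → ℝ} (hf : 0 ≤ f)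
    (hg : 0 ≤ g) : 0 ≤ noiseForm p r f g := by
  rw [noiseForm_eq_sum_noiseKernel]
  exact sum_nonneg fun x _ => sum_nonneg fun y _ =>
    mul_nonneg (prod_nonneg fun j _ => noiseKernel_nonneg (p j) (hr0 j) (hr1 j) _ _)
      (mul_nonneg (hf x) (hg y))

lemma noiseForm_self_nonneg (hr : 0 ≤ r) (f : (ι → Bool) → ℝ) : 0 ≤ noiseForm p r f f :=
  sum_nonneg fun _ _ => mul_nonneg (prod_nonneg fun j _ => hr j) (mul_self_nonneg _)

lemma noiseForm_self_mono (hr : 0 ≤ r) (hrρ : r ≤ ρ) (f : (ι → Bool) → ℝ) :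
    noiseForm p r f f ≤ noiseForm p ρ f f :=
  sum_le_sum fun _ _ => mul_le_mul_of_nonneg_right
    (prod_le_prod (fun j _ => hr j) fun j _ => hrρ j) (mul_self_nonneg _)

lemma noiseForm_sq_le (hr : 0 ≤ r) (f g : (ι → Bool) → ℝ) :
    noiseForm p r f g ^ 2 ≤ noiseForm p r f f * noiseForm p r g g := by
  have hprod (S : Finset ι) : 0 ≤ ∏ j ∈ S, r j := prod_nonneg fun j _ => hr j
  exact sum_sq_le_sum_mul_sum_of_sq_le_mul _
    (fun S _ => mul_nonneg (hprod S) (mul_self_nonneg _))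
    (fun S _ => mul_nonneg (hprod S) (mul_self_nonneg _)) fun S _ => le_of_eq (by ring)

lemma noiseForm_self_sq_le (r : ι → ℝ) (f : (ι → Bool) → ℝ) :
    noiseForm p r f f ^ 2 ≤ noiseForm p 1 f f * noiseForm p (r ^ 2) f f := by
  refine sum_sq_le_sum_mul_sum_of_sq_le_mul _ (fun S _ => ?_) (fun S _ => ?_) fun S _ => ?_
  · exact mul_nonneg (prod_nonneg fun j _ => zero_le_one) (mul_self_nonneg _)
  · exact mul_nonneg (prod_nonneg fun j _ => sq_nonneg (r j)) (mul_self_nonneg _)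
  · simp only [Pi.one_apply, Pi.pow_apply, prod_const_one, prod_pow]
    exact le_of_eq (by ring)

lemma noiseForm_update_sub (r : ι → ℝ) (k : ι) (t : ℝ) (f g : (ι → Bool) → ℝ) :
    noiseForm p (update r k t) f g - noiseForm p r f g
      = (t - r k) * (variance (p k) * noiseForm p r (discreteDeriv k f) (discreteDeriv k g)) := by
  have hpair (F : Finset ι → ℝ) :
      ∑ S, F S = ∑ S ∈ (univ.erase k).powerset, (F S + F (insert k S)) := by
    rw [sum_add_distrib, ← sum_powerset_insert (notMem_erase k univ), insert_erase (mem_univ k),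
      powerset_univ]
  have hsq : √(variance (p k)) ^ 2 = variance (p k) := Real.sq_sqrt (variance_nonneg _)
  unfold noiseForm
  rw [hpair, hpair, hpair, ← sum_sub_distrib, mul_sum, mul_sum]
  refine sum_congr rfl fun S hS => ?_
  have hk : k ∉ S := notMem_of_mem_powerset_of_notMem hS (notMem_erase k univ)
  simp only [prod_insert hk, prod_update_of_notMem hk, update_self, fourierCoeff_insert hk,
    discreteDeriv_discreteDeriv, map_zero]
  linear_combination (t - r k) * (∏ j ∈ S, r j) * fourierCoeff p S (discreteDeriv k f)
    * fourierCoeff p S (discreteDeriv k g) * hsq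

end NoiseForm

/-! ### Small-set expansion -/

/-- Small-set expansion with exponent `1 + s`: noise at the rates `ρ` moves a set of small
probability almost entirely off itself. -/
def SmallSetBound (p : ι → I) (ρ : ι → ℝ) (s : ℝ) : Prop :=
  ∀ u : (ι → Bool) → ℝ, IsIdempotentElem u → noiseForm p ρ u u ≤ expect p u ^ (1 + s)

lemma smallSetBound_one : SmallSetBound p 1 0 := fun u hu => by
  rw [noiseForm_one, hu.eq, add_zero, Real.rpow_one]

section SmallSet

variable {r : ι → ℝ} {s : ℝ} {u : (ι → Bool) → ℝ}

lemma noiseForm_sq_self_eq_expect_mul_dampedSum :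
    noiseForm p (r ^ 2) u u
      = expect p (u * dampedSum p r univ fun S => (∏ j ∈ S, r j) * fourierCoeff p S u) := by
  simp only [noiseForm, dampedSum, powerset_univ, mul_sum, mul_smul_comm, map_sum, map_smul,
    ← fourierCoeff_apply, smul_eq_mul, Pi.pow_apply, prod_pow]
  exact sum_congr rfl fun S _ => by ring

lemma noiseForm_sq_self_sq_le (hr : ∀ j, 4 * r j ^ 4 ≤ variance (p j)) (hu : IsIdempotentElem u) :
    noiseForm p (r ^ 2) u u ^ 2 ≤ expect p u ^ 3 := by
  set Q := noiseForm p (r ^ 2) u u with hQ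
  have hfourth : expect p
      ((dampedSum p r univ fun S => (∏ j ∈ S, r j) * fourierCoeff p S u) ^ 4) ≤ Q ^ 2 := by
    refine (expect_dampedSum_pow_four_le hr univ _).trans_eq ?_
    congr 1
    simp only [hQ, noiseForm, powerset_univ, Pi.pow_apply, prod_pow]
    exact sum_congr rfl fun S _ => by ring
  have hu0 : 0 ≤ expect p u := expect_idempotent_nonneg hu
  have hQ4 : Q ^ 4 ≤ expect p u ^ 3 * Q ^ 2 := by
    calc Q ^ 4 ≤ expect p u ^ 3 * expect p
          ((dampedSum p r univ fun S => (∏ j ∈ S, r j) * fourierCoeff p S u) ^ 4) := by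
          rw [hQ, noiseForm_sq_self_eq_expect_mul_dampedSum]
          exact expect_idempotent_mul_pow_four_le hu _
      _ ≤ expect p u ^ 3 * Q ^ 2 := by gcongr
  rcases eq_or_ne Q 0 with h0 | h0
  · rw [h0, zero_pow two_ne_zero]
    exact pow_nonneg hu0 3
  · have hQ2 : 0 < Q ^ 2 := by positivity
    exact le_of_mul_le_mul_right (by linarith) hQ2

lemma smallSetBound_sq (hr : ∀ j, 4 * r j ^ 4 ≤ variance (p j)) :
    SmallSetBound p (r ^ 2) (1 / 2) := fun u hu => by
  have hu0 : 0 ≤ expect p u := expect_idempotent_nonneg hu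
  refine le_of_sq_le_sq ((noiseForm_sq_self_sq_le hr hu).trans_eq ?_) (by positivity)
  rw [← Real.rpow_natCast, ← Real.rpow_natCast, ← Real.rpow_mul hu0]
  norm_num

lemma SmallSetBound.of_sq (hs : 0 ≤ s) (h : SmallSetBound p (r ^ 2) s) :
    SmallSetBound p r (s / 2) := fun u hu => by
  have hu0 : 0 ≤ expect p u := expect_idempotent_nonneg hu
  refine le_of_sq_le_sq ?_ (by positivity)
  calc noiseForm p r u u ^ 2 ≤ noiseForm p 1 u u * noiseForm p (r ^ 2) u u :=
        noiseForm_self_sq_le r u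
    _ ≤ expect p u * expect p u ^ (1 + s) := by
        rw [noiseForm_one, hu.eq]
        gcongr
        exact h u hu
    _ = (expect p u ^ (1 + s / 2)) ^ 2 := by
        rw [← Real.rpow_mul_natCast hu0, ← Real.rpow_one_add' hu0 (by positivity)]
        congr 1
        push_cast
        ring

end SmallSet

lemma smallSetBound_dyadicRate (p : ι → I) (j : ℕ) :
    SmallSetBound p (fun k => dyadicRate (p k) j) ((1 / 2) ^ j / 2) := by
  induction j with
  | zero =>
    have h : SmallSetBound p ((fun k => √(baseRate (p k))) ^ 2) (1 / 2) :=
      smallSetBound_sq fun k => four_mul_sqrt_baseRate_pow_four_le (p k)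
    convert h using 1
    · ext k
      simp [dyadicRate, Real.sq_sqrt (baseRate_nonneg (p k))]
    · norm_num
  | succ j ih =>
    have hsq : (fun k => dyadicRate (p k) (j + 1)) ^ 2 = fun k => dyadicRate (p k) j :=
      funext fun k => dyadicRate_succ_sq (p k) j
    rw [← hsq] at ih
    convert ih.of_sq (by positivity) using 1
    ring

/-! ### Removing noise one bit at a time -/

/-- The probability that the point lies in the set with indicator function `f` and flipping the bit
`k` takes it out. -/
def boundary (p : ι → I) (k : ι) (f : (ι → Bool) → ℝ) : ℝ :=
  expect p fun x => f x * (1 - f (update x k !x k))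

lemma sum_weight_mul_expect_pivotalAt (k : ι) (f : (ι → Bool) → ℝ) :
    ∑ b, weight (p k) b * expect p (pivotalAt k b f) = boundary p k f := by
  trans expect p (∑ b, weight (p k) b • pivotalAt k b f)
  · simp only [map_sum, map_smul, smul_eq_mul]
  · rw [boundary, ← expect_resample k fun x => f x * (1 - f (update x k !x k))]
    congr 1
    ext x
    simp only [Finset.sum_apply, Pi.smul_apply, smul_eq_mul, update_self, update_idem, pivotalAt]

section Boundary

variable {f : (ι → Bool) → ℝ}
lemma weight_mul_expect_pivotalAt_nonneg (hf : IsIdempotentElem f) (k : ι) (b : Bool) :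
    0 ≤ weight (p k) b * expect p (pivotalAt k b f) :=
  mul_nonneg (weight_nonneg _ b) (expect_idempotent_nonneg (isIdempotentElem_pivotalAt hf k b))

lemma boundary_nonneg (hf : IsIdempotentElem f) (k : ι) : 0 ≤ boundary p k f := by
  rw [← sum_weight_mul_expect_pivotalAt]
  exact sum_nonneg fun b _ => weight_mul_expect_pivotalAt_nonneg hf k b

lemma weight_mul_expect_pivotalAt_le (hf : IsIdempotentElem f) (k : ι) (b : Bool) :
    weight (p k) b * expect p (pivotalAt k b f) ≤ boundary p k f := by
  rw [← sum_weight_mul_expect_pivotalAt]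
  exact single_le_sum (f := fun b => weight (p k) b * expect p (pivotalAt k b f))
    (fun b _ => weight_mul_expect_pivotalAt_nonneg hf k b) (mem_univ b)

end Boundary

lemma mul_rpow_le_rpow_mul_rpow {v Y θ s : ℝ} (hv0 : 0 ≤ v) (hv1 : v ≤ 1) (hY : 0 ≤ Y)
    (hθ : 0 ≤ θ) (hs0 : 0 ≤ s) (hs1 : s ≤ 1 / 2) (h : v * Y ≤ θ ^ 2) :
    v * Y ^ ((1 + s) / 2) ≤ v ^ (1 / 4 : ℝ) * θ ^ (1 + s) := by
  have hsplit : v = v ^ (1 - (1 + s) / 2) * v ^ ((1 + s) / 2) := by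
    rw [← Real.rpow_add' hv0 (by rw [sub_add_cancel]; exact one_ne_zero), sub_add_cancel,
      Real.rpow_one]
  calc v * Y ^ ((1 + s) / 2)
      = v ^ (1 - (1 + s) / 2) * (v * Y) ^ ((1 + s) / 2) := by
        rw [Real.mul_rpow hv0 hY, ← mul_assoc, ← hsplit]
    _ ≤ v ^ (1 / 4 : ℝ) * (θ ^ 2) ^ ((1 + s) / 2) := by
        have hexp : 1 / 4 ≤ 1 - (1 + s) / 2 := by linarith
        exact mul_le_mul (Real.rpow_le_rpow_of_exponent_ge' hv0 hv1 (by norm_num) hexp)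
          (Real.rpow_le_rpow (mul_nonneg hv0 hY) h (by linarith)) (by positivity) (by positivity)
    _ = v ^ (1 / 4 : ℝ) * θ ^ (1 + s) := by
        rw [← Real.rpow_natCast_mul hθ]
        congr 2
        push_cast
        ring

section RemoveNoise

variable {r ρ : ι → ℝ} {s θ η : ℝ} {f g u w : (ι → Bool) → ℝ}

lemma noiseForm_le_rpow (hρ : SmallSetBound p ρ s) (hr : 0 ≤ r) (hrρ : r ≤ ρ)
    (hu : IsIdempotentElem u) (hw : IsIdempotentElem w) :
    noiseForm p r u w ≤ (expect p u * expect p w) ^ ((1 + s) / 2) := by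
  have hu0 : 0 ≤ expect p u := expect_idempotent_nonneg hu
  have hw0 : 0 ≤ expect p w := expect_idempotent_nonneg hw
  have hself {u} (hu : IsIdempotentElem u) : noiseForm p r u u ≤ expect p u ^ (1 + s) :=
    (noiseForm_self_mono hr hrρ u).trans (hρ u hu)
  refine le_of_sq_le_sq ?_ (by positivity)
  calc noiseForm p r u w ^ 2 ≤ noiseForm p r u u * noiseForm p r w w := noiseForm_sq_le hr u w
    _ ≤ expect p u ^ (1 + s) * expect p w ^ (1 + s) :=
        mul_le_mul (hself hu) (hself hw) (noiseForm_self_nonneg hr w) (by positivity)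
    _ = ((expect p u * expect p w) ^ ((1 + s) / 2)) ^ 2 := by
        rw [← Real.mul_rpow hu0 hw0, ← Real.rpow_mul_natCast (mul_nonneg hu0 hw0)]
        congr 1
        push_cast
        ring

lemma variance_mul_noiseForm_pivotalAt_le (hρ : SmallSetBound p ρ s) (hs0 : 0 ≤ s)
    (hs1 : s ≤ 1 / 2) (hr : 0 ≤ r) (hrρ : r ≤ ρ) (hf : IsIdempotentElem f)
    (hg : IsIdempotentElem g) {k : ι} (hfθ : boundary p k f ≤ θ) (hgθ : boundary p k g ≤ θ)
    (b : Bool) :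
    variance (p k) * noiseForm p r (pivotalAt k b f) (pivotalAt k (!b) g)
      ≤ variance (p k) ^ (1 / 4 : ℝ) * θ ^ (1 + s) := by
  have hu := isIdempotentElem_pivotalAt hf k b
  have hw := isIdempotentElem_pivotalAt hg k !b
  have hv0 : 0 ≤ variance (p k) := variance_nonneg _
  have hpair : variance (p k) * (expect p (pivotalAt k b f) * expect p (pivotalAt k (!b) g))
      ≤ θ ^ 2 := by
    have hfb := (weight_mul_expect_pivotalAt_le hf k b).trans hfθ
    have hgb := (weight_mul_expect_pivotalAt_le hg k !b).trans hgθ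
    rw [variance_eq_weight_mul_weight _ b, mul_mul_mul_comm]
    calc _ ≤ θ * θ := mul_le_mul hfb hgb (weight_mul_expect_pivotalAt_nonneg hg k !b)
          ((boundary_nonneg hf k).trans hfθ)
      _ = θ ^ 2 := (sq θ).symm
  calc _ ≤ variance (p k)
        * (expect p (pivotalAt k b f) * expect p (pivotalAt k (!b) g)) ^ ((1 + s) / 2) :=
        mul_le_mul_of_nonneg_left (noiseForm_le_rpow hρ hr hrρ hu hw) hv0
    _ ≤ _ := mul_rpow_le_rpow_mul_rpow hv0 ((variance_le_one_fourth _).trans (by norm_num))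
        (mul_nonneg (expect_idempotent_nonneg hu) (expect_idempotent_nonneg hw))
        ((boundary_nonneg hf k).trans hfθ) hs0 hs1 hpair

lemma neg_variance_mul_noiseForm_discreteDeriv_le (hρ : SmallSetBound p ρ s) (hs0 : 0 ≤ s)
    (hs1 : s ≤ 1 / 2) (hr0 : 0 ≤ r) (hr1 : r ≤ 1) (hrρ : r ≤ ρ) (hf : IsIdempotentElem f)
    (hg : IsIdempotentElem g) {k : ι} (hfθ : boundary p k f ≤ θ) (hgθ : boundary p k g ≤ θ) :
    -(variance (p k) * noiseForm p r (discreteDeriv k f) (discreteDeriv k g))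
      ≤ 2 * (variance (p k) ^ (1 / 4 : ℝ) * θ ^ (1 + s)) := by
  have hsame (b : Bool) :
      0 ≤ variance (p k) * noiseForm p r (pivotalAt k b f) (pivotalAt k b g) :=
    mul_nonneg (variance_nonneg _) (noiseForm_nonneg hr0 hr1
      (nonneg_of_isIdempotentElem (isIdempotentElem_pivotalAt hf k b))
      (nonneg_of_isIdempotentElem (isIdempotentElem_pivotalAt hg k b)))
  have hcross := variance_mul_noiseForm_pivotalAt_le hρ hs0 hs1 hr0 hrρ hf hg hfθ hgθ
  have hTF := hcross true
  have hFT := hcross false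
  simp only [Bool.not_true, Bool.not_false] at hTF hFT
  rw [discreteDeriv_eq_pivotalAt_sub, discreteDeriv_eq_pivotalAt_sub, noiseForm_sub_sub]
  linarith [hsame true, hsame false]

lemma noiseForm_piecewise_sub_le (hρ : SmallSetBound p ρ s) (hs0 : 0 ≤ s) (hs1 : s ≤ 1 / 2)
    (hr0 : 0 ≤ r) (hρ1 : ρ ≤ 1) (hrρ : r ≤ ρ)
    (hη : ∀ k, (ρ k - r k) * variance (p k) ^ (1 / 4 : ℝ) ≤ η) (hf : IsIdempotentElem f)
    (hg : IsIdempotentElem g) (hfθ : ∀ k, boundary p k f ≤ θ) (hgθ : ∀ k, boundary p k g ≤ θ)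
    (A : Finset ι) :
    noiseForm p (A.piecewise r ρ) f g - noiseForm p ρ f g ≤ #A * (2 * η * θ ^ (1 + s)) := by
  induction A using Finset.induction_on with
  | empty => simp
  | insert k A hk ih =>
    have hθ0 : 0 ≤ θ := (boundary_nonneg hf k).trans (hfθ k)
    have hle : A.piecewise r ρ ≤ ρ := piecewise_le_of_le_of_le A hrρ le_rfl
    have hderiv := neg_variance_mul_noiseForm_discreteDeriv_le hρ hs0 hs1
      (le_piecewise_of_le_of_le A hr0 (hr0.trans hrρ)) (hle.trans hρ1) hle hf hg (hfθ k) (hgθ k)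
    have hstep : noiseForm p ((insert k A).piecewise r ρ) f g
        - noiseForm p (A.piecewise r ρ) f g ≤ 2 * η * θ ^ (1 + s) := by
      rw [piecewise_insert, noiseForm_update_sub, piecewise_eq_of_notMem _ _ _ hk]
      have h1 := mul_le_mul_of_nonneg_left hderiv (sub_nonneg.2 (hrρ k))
      have h2 := mul_le_mul_of_nonneg_right (hη k) (Real.rpow_nonneg hθ0 (1 + s))
      linarith
    rw [card_insert_of_notMem hk]
    push_cast
    linarith

lemma noiseForm_sub_le (hρ : SmallSetBound p ρ s) (hs0 : 0 ≤ s) (hs1 : s ≤ 1 / 2)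
    (hr0 : 0 ≤ r) (hρ1 : ρ ≤ 1) (hrρ : r ≤ ρ)
    (hη : ∀ k, (ρ k - r k) * variance (p k) ^ (1 / 4 : ℝ) ≤ η) (hf : IsIdempotentElem f)
    (hg : IsIdempotentElem g) (hfθ : ∀ k, boundary p k f ≤ θ) (hgθ : ∀ k, boundary p k g ≤ θ) :
    noiseForm p r f g - noiseForm p ρ f g ≤ Fintype.card ι * (2 * η * θ ^ (1 + s)) := by
  have h := noiseForm_piecewise_sub_le hρ hs0 hs1 hr0 hρ1 hrρ hη hf hg hfθ hgθ univ
  rwa [piecewise_univ, card_univ] at h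

end RemoveNoise

/-! ### Two disjoint sets have a large boundary -/

section DisjointSets

lemma mul_rpow_mul_neg_log_le {θ : ℝ} (hθ : 0 < θ) (s : ℝ) :
    s * θ ^ s * -Real.log θ ≤ 2 * (θ ^ (s / 2) - θ ^ s) := by
  have hhalf : θ ^ (s / 2) = θ ^ s * Real.exp (Real.log θ * -(s / 2)) := by
    rw [← Real.rpow_def_of_pos hθ, ← Real.rpow_add hθ]
    congr 1
    ring
  have h := mul_le_mul_of_nonneg_left (Real.add_one_le_exp (Real.log θ * -(s / 2)))
    (Real.rpow_nonneg hθ.le s)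
  rw [hhalf]
  linarith

variable {r : ι → ℝ} {θ : ℝ} {f g : (ι → Bool) → ℝ}

lemma noiseForm_sub_dyadicRate_mul_neg_log_le (hθ0 : 0 < θ) (hθ1 : θ ≤ 1) (hr : 0 ≤ r) (j : ℕ)
    (hrj : ∀ k, r k ≤ dyadicRate (p k) j)
    (hj : ∀ k, (dyadicRate (p k) j - r k) * variance (p k) ^ (1 / 4 : ℝ) ≤ 4 * (1 / 2) ^ j)
    (hf : IsIdempotentElem f) (hg : IsIdempotentElem g) (hfθ : ∀ k, boundary p k f ≤ θ)
    (hgθ : ∀ k, boundary p k g ≤ θ) :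
    (noiseForm p r f g - noiseForm p (fun k => dyadicRate (p k) j) f g) * -Real.log θ
      ≤ Fintype.card ι * (32 * θ * (θ ^ ((1 / 2 : ℝ) ^ j / 4) - θ ^ ((1 / 2 : ℝ) ^ j / 2))) := by
  have hpow : (1 / 2 : ℝ) ^ j ≤ 1 := pow_le_one₀ (by norm_num) (by norm_num)
  have hsub := noiseForm_sub_le (smallSetBound_dyadicRate p j) (by positivity) (by linarith) hr
    (fun k => dyadicRate_le_one (p k) j) hrj hj hf hg hfθ hgθ
  have hlog := mul_rpow_mul_neg_log_le hθ0 ((1 / 2) ^ j / 2)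
  rw [div_div, show (2 : ℝ) * 2 = 4 by norm_num] at hlog
  calc _ ≤ Fintype.card ι * (2 * (4 * (1 / 2) ^ j) * θ ^ (1 + (1 / 2 : ℝ) ^ j / 2))
        * -Real.log θ :=
        mul_le_mul_of_nonneg_right hsub (neg_nonneg.2 (Real.log_nonpos hθ0.le hθ1))
    _ = Fintype.card ι * (16 * θ * ((1 / 2) ^ j / 2 * θ ^ ((1 / 2 : ℝ) ^ j / 2)
        * -Real.log θ)) := by
        rw [Real.rpow_add hθ0, Real.rpow_one]
        ring
    _ ≤ Fintype.card ι * (16 * θ * (2 * (θ ^ ((1 / 2 : ℝ) ^ j / 4)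
        - θ ^ ((1 / 2 : ℝ) ^ j / 2)))) := by gcongr
    _ = _ := by ring

lemma expect_mul_expect_sub_noiseForm_mul_neg_log_le (hθ0 : 0 < θ) (hθ1 : θ ≤ 1)
    (hf : IsIdempotentElem f) (hg : IsIdempotentElem g) (hfθ : ∀ k, boundary p k f ≤ θ)
    (hgθ : ∀ k, boundary p k g ≤ θ) (j : ℕ) :
    (expect p f * expect p g - noiseForm p (fun k => dyadicRate (p k) j) f g) * -Real.log θ
      ≤ Fintype.card ι * (32 * θ * θ ^ ((1 / 2 : ℝ) ^ j / 4)) := by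
  induction j with
  | zero =>
    have h := noiseForm_sub_dyadicRate_mul_neg_log_le (p := p) hθ0 hθ1 le_rfl 0
      (fun k => dyadicRate_nonneg (p k) 0) (fun k => ?_) hf hg hfθ hgθ
    · rw [noiseForm_zero] at h
      refine h.trans ?_
      gcongr
      exact sub_le_self _ (by positivity)
    · have hv := Real.rpow_le_one (z := 1 / 4) (variance_nonneg (p k))
        ((variance_le_one_fourth (p k)).trans (by norm_num)) (by norm_num)
      have := mul_le_one₀ (dyadicRate_le_one (p k) 0)
        (Real.rpow_nonneg (variance_nonneg (p k)) _) hv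
      rw [Pi.zero_apply, sub_zero, pow_zero]
      linarith
  | succ j ih =>
    have h := noiseForm_sub_dyadicRate_mul_neg_log_le (p := p) hθ0 hθ1
      (fun k => dyadicRate_nonneg (p k) j) (j + 1) (fun k => dyadicRate_le_succ (p k) j)
      (fun k => ?_) hf hg hfθ hgθ
    · rw [show (1 / 2 : ℝ) ^ (j + 1) / 2 = (1 / 2) ^ j / 4 by ring] at h
      linarith
    · refine le_trans ?_ (one_sub_dyadicRate_mul_variance_rpow_le (p k) (j + 1))
      refine mul_le_mul_of_nonneg_right ?_ (Real.rpow_nonneg (variance_nonneg _) _)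
      rw [← dyadicRate_succ_sq (p k) j]
      linarith [sq_nonneg (1 - dyadicRate (p k) (j + 1))]

lemma expect_mul_expect_mul_neg_log_le (hfg : f * g = 0) (hθ0 : 0 < θ) (hθ1 : θ < 1)
    (hf : IsIdempotentElem f) (hg : IsIdempotentElem g) (hfθ : ∀ k, boundary p k f ≤ θ)
    (hgθ : ∀ k, boundary p k g ≤ θ) :
    expect p f * expect p g * -Real.log θ ≤ 40 * Fintype.card ι * θ := by
  have hΛ : 0 < -Real.log θ := neg_pos.2 (Real.log_neg hθ0 hθ1)
  obtain ⟨J, hJ⟩ := exists_pow_lt_of_lt_one (inv_pos.2 hΛ) (show (1 / 2 : ℝ) < 1 by norm_num)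
  have hlow := expect_mul_expect_sub_noiseForm_mul_neg_log_le hθ0 hθ1.le hf hg hfθ hgθ J
  have hhigh := noiseForm_sub_le smallSetBound_one le_rfl (by norm_num)
    (fun k => dyadicRate_nonneg (p k) J) le_rfl (fun k => dyadicRate_le_one (p k) J)
    (fun k => one_sub_dyadicRate_mul_variance_rpow_le (p k) J) hf hg hfθ hgθ
  rw [noiseForm_one, hfg, map_zero, sub_zero, add_zero, Real.rpow_one] at hhigh
  have hJΛ : (1 / 2) ^ J * -Real.log θ ≤ 1 :=
    (mul_le_mul_of_nonneg_right hJ.le hΛ.le).trans_eq (inv_mul_cancel₀ hΛ.ne')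
  have hlow' : Fintype.card ι * (32 * θ * θ ^ ((1 / 2 : ℝ) ^ J / 4))
      ≤ Fintype.card ι * (32 * θ * 1) := by
    gcongr
    exact Real.rpow_le_one hθ0.le hθ1.le (by positivity)
  have hhigh' := mul_le_mul_of_nonneg_right hhigh hΛ.le
  have : Fintype.card ι * θ * ((1 / 2) ^ J * -Real.log θ) ≤ Fintype.card ι * θ * 1 := by gcongr
  linarith

lemma half_log_le_neg_log {P n : ℝ} (hP0 : 0 < P) (hP1 : P ≤ 1) (hn : 1 < n) :
    Real.log n / 2 ≤ -Real.log (P * Real.log n / (100 * n)) := by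
  have hn0 : 0 < n := zero_lt_one.trans hn
  have hs : 0 < √n := Real.sqrt_pos.2 hn0
  have hlog : 0 < Real.log n := Real.log_pos hn
  have hlog_le : Real.log n ≤ 2 * √n := by
    have h := Real.log_le_self hs.le
    rw [Real.log_sqrt hn0.le] at h
    linarith
  have hsqrt : P * Real.log n / (100 * n) * √n ≤ 1 := by
    calc P * Real.log n / (100 * n) * √n = P * Real.log n * √n / (100 * n) :=
          div_mul_eq_mul_div _ _ _
      _ ≤ 1 * (2 * √n) * √n / (100 * n) := by gcongr
      _ = 1 / 50 := by
        rw [one_mul, mul_assoc, Real.mul_self_sqrt hn0.le]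
        field_simp
        norm_num
      _ ≤ 1 := by norm_num
  have h := Real.log_nonpos (by positivity) hsqrt
  rw [Real.log_mul (by positivity) hs.ne', Real.log_sqrt hn0.le] at h
  linarith

lemma exists_lt_boundary_add_boundary [Nontrivial ι] (hf : IsIdempotentElem f)
    (hg : IsIdempotentElem g) (hfg : f * g = 0) (hf0 : 0 < expect p f) (hg0 : 0 < expect p g) :
    ∃ k, expect p f * expect p g * Real.log (Fintype.card ι) / (100 * Fintype.card ι)
      < boundary p k f + boundary p k g := by
  by_contra! hall
  set n := (Fintype.card ι : ℝ) with hn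
  have hn1 : 1 < n := Nat.one_lt_cast.2 Fintype.one_lt_card
  have hlog : 0 < Real.log n := Real.log_pos hn1
  set P := expect p f * expect p g with hP
  have hP0 : 0 < P := mul_pos hf0 hg0
  have hP1 : P ≤ 1 :=
    mul_le_one₀ (expect_idempotent_le_one hf) hg0.le (expect_idempotent_le_one hg)
  set θ := P * Real.log n / (100 * n) with hθ
  have hθ0 : 0 < θ := by positivity
  have hlogθ : Real.log n / 2 ≤ -Real.log θ := half_log_le_neg_log hP0 hP1 hn1
  have hθ1 : θ < 1 := (Real.log_neg_iff hθ0).1 (by linarith)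
  have h := expect_mul_expect_mul_neg_log_le hfg hθ0 hθ1 hf hg
    (fun k => (le_add_of_nonneg_right (boundary_nonneg hg k)).trans (hall k))
    (fun k => (le_add_of_nonneg_left (boundary_nonneg hf k)).trans (hall k))
  have hmul : 40 * n * θ = P * (2 / 5 * Real.log n) := by
    rw [hθ]
    field_simp
    norm_num
  rw [← hP, ← hn, hmul] at h
  linarith [le_of_mul_le_mul_left h hP0]

end DisjointSets

/-! ### Greedy growth of the coalition -/

section ForcedProb

lemma expect_forced_insert {α : Type*} (f : (ι → Bool) → α) (S : Finset ι) (k : ι) (b : α) :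
    expect p (forced f (insert k S) b)
      = expect p (forced f S b) - boundary p k (forced f S b) := by
  rw [boundary, ← map_sub]
  congr 1
  ext x
  rw [forced_insert, Pi.sub_apply]
  ring

variable {f : (ι → Bool) → Bool} {S : Finset ι} {ε : ℝ}

/-- The probability that the coalition `S` has no influence on the value of `f`. -/
def forcedProb (p : ι → I) (f : (ι → Bool) → Bool) (S : Finset ι) : ℝ :=
  ∑ b, expect p (forced f S b)

lemma forcedProb_le_one : forcedProb p f S ≤ 1 := by
  have hdisj (b : Bool) : forced f S b * forced f S (!b) = 0 :=
    forced_mul_forced (Bool.not_ne_self b).symm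
  have hidem : IsIdempotentElem (forced f S true + forced f S false) :=
    (isIdempotentElem_forced f S true).add (isIdempotentElem_forced f S false)
      (by simpa using congrArg₂ (· + ·) (hdisj true) (hdisj false))
  rw [forcedProb, Fintype.sum_bool, ← map_add]
  exact expect_idempotent_le_one hidem

lemma exists_forcedProb_insert_le [Nontrivial ι] (hε : 0 ≤ ε)
    (h : ∀ b, ε < expect p (forced f S b)) :
    ∃ k, forcedProb p f (insert k S)
      ≤ (1 - ε * Real.log (Fintype.card ι) / (200 * Fintype.card ι)) * forcedProb p f S := by
  obtain ⟨k, hk⟩ := exists_lt_boundary_add_boundary (isIdempotentElem_forced f S true)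
    (isIdempotentElem_forced f S false) (forced_mul_forced (by decide)) (hε.trans_lt (h true))
    (hε.trans_lt (h false))
  refine ⟨k, ?_⟩
  simp only [forcedProb, Fintype.sum_bool, expect_forced_insert]
  set t := expect p (forced f S true)
  set u := expect p (forced f S false)
  have hprod : ε / 2 * (t + u) ≤ t * u := by
    have ht := mul_le_mul_of_nonneg_left (h false).le (hε.trans (h true).le)
    have hu := mul_le_mul_of_nonneg_left (h true).le (hε.trans (h false).le)
    linarith
  have hlog : 0 ≤ Real.log (Fintype.card ι) / (100 * Fintype.card ι) := by positivity
  have := mul_le_mul_of_nonneg_right hprod hlog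
  have hrate : ε * Real.log (Fintype.card ι) / (200 * Fintype.card ι)
      = ε / 2 * (Real.log (Fintype.card ι) / (100 * Fintype.card ι)) := by ring
  rw [mul_div_assoc] at hk
  rw [hrate]
  linarith

lemma exists_card_le_and_expect_forced_le_or [Nontrivial ι] (f : (ι → Bool) → Bool)
    (hε : 0 ≤ ε) (m : ℕ) :
    ∃ S : Finset ι, #S ≤ m ∧ ((∃ b, expect p (forced f S b) ≤ ε) ∨ forcedProb p f S
      ≤ Real.exp (-(ε * Real.log (Fintype.card ι) / (200 * Fintype.card ι))) ^ m) := by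
  induction m with
  | zero => exact ⟨∅, le_rfl, .inr (by rw [pow_zero]; exact forcedProb_le_one)⟩
  | succ m ih =>
    obtain ⟨S, hcard, hS⟩ := ih
    by_cases hb : ∃ b, expect p (forced f S b) ≤ ε
    · exact ⟨S, hcard.trans m.le_succ, .inl hb⟩
    · obtain ⟨k, hk⟩ := exists_forcedProb_insert_le hε fun b => not_le.1 (not_exists.1 hb b)
      have hpos : 0 ≤ forcedProb p f S :=
        sum_nonneg fun b _ => expect_idempotent_nonneg (isIdempotentElem_forced f S b)
      refine ⟨insert k S, (card_insert_le k S).trans (Nat.succ_le_succ hcard), .inr (hk.trans ?_)⟩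
      rw [pow_succ']
      exact mul_le_mul (Real.one_sub_le_exp_neg _) (hS.resolve_left hb) hpos (Real.exp_nonneg _)

lemma exp_neg_pow_floor_le {δ : ℝ} (hδ0 : 0 < δ) (hδ2 : δ ≤ Real.log 2) (hε : 0 < ε) :
    Real.exp (-δ) ^ ⌊Real.log (1 / ε) / δ⌋₊ ≤ 2 * ε := by
  have hfloor : Real.log (1 / ε) < (⌊Real.log (1 / ε) / δ⌋₊ + 1) * δ :=
    (div_lt_iff₀ hδ0).1 (Nat.lt_floor_add_one _)
  rw [one_div, Real.log_inv] at hfloor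
  rw [← Real.exp_nat_mul, ← Real.le_log_iff_exp_le (by positivity),
    Real.log_mul two_ne_zero hε.ne', one_div, Real.log_inv]
  linarith

lemma exists_card_le_and_expect_forced_le [Nontrivial ι] (p : ι → I) (f : (ι → Bool) → Bool)
    (hε0 : 0 < ε) (hε1 : ε ≤ 1) :
    ∃ (b : Bool) (S : Finset ι),
      #S ≤ 200 * (Real.logb 2 (1 / ε) * Fintype.card ι / (ε * Real.logb 2 (Fintype.card ι))) ∧
      expect p (forced f S b) ≤ ε := by
  set n := (Fintype.card ι : ℝ)
  have hn1 : 1 < n := Nat.one_lt_cast.2 Fintype.one_lt_card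
  have hlog : 0 < Real.log n := Real.log_pos hn1
  set δ := ε * Real.log n / (200 * n) with hδ
  have hδ0 : 0 < δ := by positivity
  have hlogε : 0 ≤ Real.log (1 / ε) := Real.log_nonneg (one_le_one_div hε0 hε1)
  have hδ2 : δ ≤ Real.log 2 := by
    have hlog_le : Real.log n ≤ n := Real.log_le_self (zero_le_one.trans hn1.le)
    calc δ ≤ 1 * n / (200 * n) := by rw [hδ]; gcongr
      _ = 1 / 200 := by field_simp
      _ ≤ Real.log 2 := by linarith [Real.log_two_gt_d9]
  obtain ⟨S, hcard, hS⟩ :=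
    exists_card_le_and_expect_forced_le_or (p := p) f hε0.le ⌊Real.log (1 / ε) / δ⌋₊
  have hforced : ∃ b, expect p (forced f S b) ≤ ε := by
    refine hS.elim id fun hS => ?_
    by_contra! hall
    have hsum := hS.trans (exp_neg_pow_floor_le hδ0 hδ2 hε0)
    rw [forcedProb, Fintype.sum_bool] at hsum
    linarith [hall true, hall false]
  obtain ⟨b, hb⟩ := hforced
  refine ⟨b, S, ?_, hb⟩
  calc (#S : ℝ) ≤ Real.log (1 / ε) / δ :=
        (Nat.cast_le.2 hcard).trans (Nat.floor_le (by positivity))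
    _ = 200 * (Real.logb 2 (1 / ε) * n / (ε * Real.logb 2 n)) := by
        rw [hδ, Real.logb, Real.logb]
        have := (Real.log_pos one_lt_two).ne'
        field_simp

end ForcedProb

/-! ### Influence over a product measure -/

section Influence

/-- The parameter of a Bernoulli law. -/
def trueProb (ν : Measure Bool) [IsProbabilityMeasure ν] : I :=
  ⟨ν.real {true}, measureReal_nonneg, measureReal_le_one⟩

lemma weight_trueProb (ν : Measure Bool) [IsProbabilityMeasure ν] (b : Bool) :
    weight (trueProb ν) b = ν.real {b} := by
  cases b
  · have hcompl : ({true} : Set Bool)ᶜ = {false} := by ext b; cases b <;> simp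
    rw [← hcompl, probReal_compl_eq_one_sub (measurableSet_singleton true)]
    rfl
  · rfl

variable (μs : ι → Measure Bool) [∀ i, IsProbabilityMeasure (μs i)]

lemma expect_indicator_one_eq_measureReal_pi (A : Set (ι → Bool)) :
    expect (fun i => trueProb (μs i)) (A.indicator 1) = (Measure.pi μs).real A := by
  have hsingleton (x : ι → Bool) :
      (Measure.pi μs).real {x} = prob (fun i => trueProb (μs i)) x := by
    simp only [measureReal_def, Measure.pi_singleton, ENNReal.toReal_prod, prob, weight_trueProb]
  rw [← integral_indicator_one A.toFinite.measurableSet, integral_fintype .of_finite, expect_apply]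
  simp only [hsingleton, smul_eq_mul]

lemma infl_pi_eq_one_sub_expect_forced (f : (ι → Bool) → Bool) (S : Finset ι) (b : Bool) :
    infl (Measure.pi μs) f S b = 1 - expect (fun i => trueProb (μs i)) (forced f S !b) := by
  have hcompl : {x | ∃ y, (∀ j ∉ S, y j = x j) ∧ f y = b} = (forcedSet f S !b)ᶜ := by
    ext x
    simp [forcedSet]
  rw [forced, expect_indicator_one_eq_measureReal_pi, infl, hcompl, ← measureReal_def,
    probReal_compl_eq_one_sub (Set.toFinite _).measurableSet]

end Influence

end

end BiasedCube

open BiasedCube in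
theorem single_round_boolean_general {ι : Type*} [Fintype ι] [Nontrivial ι]
    (μs : ι → Measure Bool) [∀ i, IsProbabilityMeasure (μs i)] {ε : ℝ} (hε0 : 0 < ε) (hε1 : ε ≤ 1)
    (f : (ι → Bool) → Bool) :
    ∃ (b : Bool) (S : Finset ι),
      (S.card : ℝ) ≤
        200 * (Real.logb 2 (1 / ε) * Fintype.card ι / (ε * Real.logb 2 (Fintype.card ι))) ∧
      infl (Measure.pi μs) f S b ≥ 1 - ε := by
  classical
  obtain ⟨b, S, hcard, hforced⟩ :=
    exists_card_le_and_expect_forced_le (fun i => trueProb (μs i)) f hε0 hε1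
  refine ⟨!b, S, hcard, ?_⟩
  rw [infl_pi_eq_one_sub_expect_forced, Bool.not_not]
  exact sub_le_sub_left hforced 1

/-- over any product measure on the Boolean cube, any Boolean function can be
biased towards some value `b` by a coalition of `O(log(1/ε)·n/(ε·log n) + n·loglog n/(ε·log n))`
players. -/
theorem single_round_boolean :
    ∃ C : ℝ, C > 0 ∧
      ∀ n : ℕ, 16 ≤ n →
      ∀ μs : Fin n → Measure Bool, (∀ i, IsProbabilityMeasure (μs i)) →
      ∀ ε : ℝ, 0 < ε → ε ≤ 1/2 →
      ∀ f : (Fin n → Bool) → Bool,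
      ∃ (b : Bool) (S : Finset (Fin n)),
        (S.card : ℝ) ≤ C * (Real.logb 2 (1/ε) * n / (ε * Real.logb 2 n)
            + n * Real.logb 2 (Real.logb 2 n) / (ε * Real.logb 2 n)) ∧
        infl (Measure.pi μs) f S b ≥ 1 - ε := by
  refine ⟨200, by norm_num, fun n hn μs hμs ε hε0 hε1 f => ?_⟩
  have : Nontrivial (Fin n) := Fin.nontrivial_iff_two_le.2 (by lia)
  obtain ⟨b, S, hcard, hinfl⟩ :=
    single_round_boolean_general μs hε0 (hε1.trans (by norm_num)) f
  rw [Fintype.card_fin] at hcard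
  have hlog : 1 ≤ Real.logb 2 n := by
    rw [Real.le_logb_iff_rpow_le one_lt_two (by positivity), Real.rpow_one]
    exact_mod_cast (by lia : 2 ≤ n)
  have hloglog : 0 ≤ n * Real.logb 2 (Real.logb 2 n) / (ε * Real.logb 2 n) :=
    div_nonneg (mul_nonneg n.cast_nonneg (Real.logb_nonneg one_lt_two hlog)) (by positivity)
  exact ⟨b, S, hcard.trans (by linarith), hinfl⟩
end

section
/- There is a universal constant C' > 0 such that the following holds. Let ε ∈ (0,1/2], let 𝓡 be a finite set with |𝓡| ≥ 2, and set m = ⌈log |𝓡|⌉ and C = C'·( m^3·log(m/ε)/ε^2 + 1/ε + 2^m ). Then for every sufficiently large n (depending on ε and |𝓡|), every product probability measure μ on {0,1}^n, and every f : {0,1}^n → 𝓡, there exist b ∈ 𝓡 and S ⊆ [n] with |S| ≤ C·n·log log n/log n such that I_S^b(f) ≥ 1 − ε. -/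
open MeasureTheory

/-! Put `δ = 1 / log n` and call a coordinate balanced if both of its values have probability at
least `δ`; every other coordinate has a rare value, of probability less than `δ`.

A balanced coordinate satisfies a logarithmic Sobolev inequality with constant `O(log (1 / δ))`.
Tensorizing it and applying it to martingale differences, as Falik and Samorodnitsky do, gives for
each non-constant event a coordinate of influence `Ω(Var * log n / (n * log (1 / δ)))`. So a popular
outcome of a function of the balanced coordinates can be boosted to probability `1 - ε`, one
coordinate at a time.

On the other coordinates, take the coalition of all coordinates that are rare in one of boundedly
many independent samples. Its expected size is `O(δ * n)`, which is `o(n * log log n / log n)`, and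
yet its law is independent of the function that it biases.

For each setting `u` of the balanced coordinates, let `F u` be an outcome which that random
coalition tends to force, and boost `F`. Since the law does not depend on `u`, a single draw of the
random coalition serves almost all `u` on average.
-/

section CoordinateAverages

open Function

variable {ι : Type*} [Fintype ι] [DecidableEq ι] {α : ι → Type*} [∀ i, MeasurableSpace (α i)]

theorem measurePreserving_piecewise (μ : ∀ i, Measure (α i)) [∀ i, IsProbabilityMeasure (μ i)]
    (s : Finset ι) :
    MeasurePreserving (fun p : (∀ i, α i) × (∀ i, α i) => s.piecewise p.1 p.2)
      ((Measure.pi μ).prod (Measure.pi μ)) (Measure.pi μ) := by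
  have hmeas : Measurable fun p : (∀ i, α i) × (∀ i, α i) => s.piecewise p.1 p.2 := by
    refine measurable_pi_iff.2 fun i => ?_
    by_cases hi : i ∈ s <;> simp only [Finset.piecewise, hi, if_true, if_false] <;> fun_prop
  refine ⟨hmeas, (Measure.pi_eq fun B hB => ?_).symm⟩
  have hpre : (fun p : (∀ i, α i) × (∀ i, α i) => s.piecewise p.1 p.2) ⁻¹' Set.univ.pi B =
      (s : Set ι).pi B ×ˢ ((sᶜ : Finset ι) : Set ι).pi B := by
    ext p
    simp only [Set.mem_preimage, Set.mem_prod, Set.mem_pi, Finset.mem_coe,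
      Finset.mem_compl, ← forall_and, Finset.piecewise]
    refine forall_congr' fun i => ?_
    by_cases hi : i ∈ s <;> simp [hi]
  rw [Measure.map_apply hmeas (.univ_pi hB), hpre, Measure.prod_prod, Measure.pi_pi_finset,
    Measure.pi_pi_finset, Finset.prod_mul_prod_compl]

/-- The average of `f` over the coordinates in `s`, the other coordinates being frozen: the
conditional expectation of `f` given the coordinates outside `s`, realised as a function on the
whole product by resampling the coordinates in `s`. -/
noncomputable def coordAvg (μ : ∀ i, Measure (α i)) (s : Finset ι) (f : (∀ i, α i) → ℝ)
    (x : ∀ i, α i) : ℝ :=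
  ∫ y, f (s.piecewise y x) ∂Measure.pi μ

variable {μ : ∀ i, Measure (α i)} {s t : Finset ι} {f g : (∀ i, α i) → ℝ}

theorem dependsOn_coordAvg : DependsOn (coordAvg μ s f) (s : Set ι)ᶜ := fun x x' h => by
  have hx : ∀ y, s.piecewise y x = s.piecewise y x' := fun y => by
    ext i
    by_cases hi : i ∈ s
    · simp [hi]
    · simpa [hi] using h i hi
  simp only [coordAvg, hx]

theorem coordAvg_univ : coordAvg μ .univ f = fun _ => ∫ x, f x ∂Measure.pi μ := by
  simp [coordAvg, funext_iff]

theorem coordAvg_mul_of_dependsOn (hg : DependsOn g (s : Set ι)ᶜ) :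
    coordAvg μ s (fun x => g x * f x) = fun x => g x * coordAvg μ s f x := by
  ext x
  have hgx : ∀ y, g (s.piecewise y x) = g x := fun y =>
    hg fun i hi => s.piecewise_eq_of_notMem _ _ (by simpa using hi)
  simp only [coordAvg, hgx, integral_const_mul]

theorem coordAvg_nonneg (hf : ∀ x, 0 ≤ f x) (x : ∀ i, α i) : 0 ≤ coordAvg μ s f x :=
  integral_nonneg fun _ => hf _

theorem abs_coordAvg_le (x : ∀ i, α i) : |coordAvg μ s f x| ≤ coordAvg μ s (fun y => |f y|) x :=
  abs_integral_le_integral_abs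

variable [∀ i, IsProbabilityMeasure (μ i)]

theorem coordAvg_empty : coordAvg μ ∅ f = f := by
  ext x
  simp [coordAvg]

variable [∀ i, Finite (α i)] [∀ i, MeasurableSingletonClass (α i)]

theorem coordAvg_sub :
    coordAvg μ s (fun x => f x - g x) = fun x => coordAvg μ s f x - coordAvg μ s g x :=
  funext fun _ => integral_sub .of_finite .of_finite

theorem coordAvg_singleton (i : ι) (x : ∀ i, α i) :
    coordAvg μ {i} f x = ∫ a, f (update x i a) ∂μ i := by
  simp only [coordAvg, Finset.piecewise_singleton]
  exact integral_comp_eval (f := fun a => f (update x i a)) .of_discrete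

theorem coordAvg_coordAvg : coordAvg μ s (coordAvg μ t f) = coordAvg μ (s ∪ t) f := by
  ext x
  have hpiecewise : ∀ y z,
      t.piecewise z (s.piecewise y x) = (s ∪ t).piecewise (t.piecewise z y) x := fun y z => by
    ext i
    by_cases hs : i ∈ s <;> by_cases ht : i ∈ t <;> simp [hs, ht]
  simp only [coordAvg, hpiecewise]
  rw [integral_integral_swap .of_finite,
    ← integral_prod (fun p => f ((s ∪ t).piecewise (t.piecewise p.1 p.2) x)) .of_finite,
    ← integral_map (f := fun z => f ((s ∪ t).piecewise z x))
      (measurePreserving_piecewise μ t).aemeasurable .of_discrete,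
    (measurePreserving_piecewise μ t).map_eq]

theorem integral_coordAvg : ∫ x, coordAvg μ s f x ∂Measure.pi μ = ∫ x, f x ∂Measure.pi μ := by
  obtain ⟨x⟩ := (Measure.pi μ).nonempty_of_neZero
  have h := congrFun (coordAvg_coordAvg (μ := μ) (s := .univ) (t := s) (f := f)) x
  rwa [Finset.union_eq_left.2 s.subset_univ, coordAvg_univ, coordAvg_univ] at h

theorem integral_mul_coordAvg (hg : DependsOn g (s : Set ι)ᶜ) :
    ∫ x, g x * coordAvg μ s f x ∂Measure.pi μ = ∫ x, g x * f x ∂Measure.pi μ := by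
  rw [← coordAvg_mul_of_dependsOn hg, integral_coordAvg]

theorem integral_sub_coordAvg_sq :
    ∫ x, (f x - coordAvg μ s f x) ^ 2 ∂Measure.pi μ =
      ∫ x, f x ^ 2 ∂Measure.pi μ - ∫ x, coordAvg μ s f x ^ 2 ∂Measure.pi μ := by
  have hcross := integral_mul_coordAvg (μ := μ) (f := f) (dependsOn_coordAvg (s := s) (f := f)
    (μ := μ))
  calc ∫ x, (f x - coordAvg μ s f x) ^ 2 ∂Measure.pi μ
      = ∫ x, (f x ^ 2 - 2 * (coordAvg μ s f x * f x) + coordAvg μ s f x * coordAvg μ s f x)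
          ∂Measure.pi μ := by
        congr! 2 with x
        ring
    _ = _ := by
        rw [integral_add .of_finite .of_finite, integral_sub .of_finite .of_finite,
          integral_const_mul, hcross]
        simp only [pow_two, hcross]
        ring

theorem integral_abs_coordAvg_le :
    ∫ x, |coordAvg μ s f x| ∂Measure.pi μ ≤ ∫ x, |f x| ∂Measure.pi μ :=
  (integral_mono .of_finite .of_finite abs_coordAvg_le).trans_eq integral_coordAvg

end CoordinateAverages

section LogSobolev

open Function ProbabilityTheory

variable {α : Type*} [MeasurableSpace α]

/-- The entropy `𝔼[F log F] - 𝔼[F] log 𝔼[F]` of a nonnegative function `F` under `ν`. -/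
noncomputable def entropyFunctional (ν : Measure α) (F : α → ℝ) : ℝ :=
  ∫ a, F a * Real.log (F a) ∂ν - (∫ a, F a ∂ν) * Real.log (∫ a, F a ∂ν)

/-- `ν` satisfies the logarithmic Sobolev inequality with constant `K`, for the Dirichlet form given
by the variance. -/
def HasLogSobolev (ν : Measure α) (K : ℝ) : Prop :=
  ∀ g : α → ℝ, entropyFunctional ν (fun a => g a ^ 2) ≤ K * Var[g; ν]

/-- A logarithmic Sobolev constant for probability measures all of whose atoms have mass at least
`δ`. -/
noncomputable def logSobolevConst (δ : ℝ) : ℝ := 9 + 4 * Real.log (1 / δ)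

theorem mul_log_add_sub_le_mul_log {x c : ℝ} (hx : 0 ≤ x) (hc : 0 < c) :
    x * Real.log c + x - c ≤ x * Real.log x := by
  rcases hx.eq_or_lt with rfl | hx
  · simpa using hc.le
  · have hlog := Real.log_le_sub_one_of_pos (div_pos hc hx)
    rw [Real.log_div hc.ne' hx.ne', le_sub_iff_add_le, le_div_iff₀ hx] at hlog
    linarith

theorem two_mul_sq_mul_log_le {δ t : ℝ} (hδ : 0 < δ) (hδ1 : δ ≤ 1) (ht : 0 ≤ t)
    (htδ : t ≤ 1 / δ) :
    2 * t ^ 2 * Real.log t ≤ t ^ 2 - 1 + logSobolevConst δ * (t - 1) ^ 2 := by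
  have hlogδ : 0 ≤ Real.log (1 / δ) := Real.log_nonneg ((one_le_div₀ hδ).2 hδ1)
  unfold logSobolevConst
  rcases le_or_gt t 4 with h4 | h4
  · have hlog : t * Real.log t ≤ t * (t - 1) := by
      rcases ht.eq_or_lt with rfl | ht
      · simp
      · exact mul_le_mul_of_nonneg_left (Real.log_le_sub_one_of_pos ht) ht.le
    have hcubic : 2 * t ^ 2 * (t - 1) ≤ t ^ 2 - 1 + 9 * (t - 1) ^ 2 := by
      nlinarith [mul_nonneg (sub_nonneg.2 h4) (sq_nonneg (t - 1))]
    nlinarith [mul_le_mul_of_nonneg_left hlog ht, mul_nonneg hlogδ (sq_nonneg (t - 1))]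
  · have hlog : Real.log t ≤ Real.log (1 / δ) := Real.log_le_log (by linarith) htδ
    have hsq : 2 * t ^ 2 ≤ 4 * (t - 1) ^ 2 := by nlinarith
    calc 2 * t ^ 2 * Real.log t ≤ 4 * (t - 1) ^ 2 * Real.log (1 / δ) :=
          mul_le_mul hsq hlog (Real.log_nonneg (by linarith)) (by positivity)
      _ ≤ t ^ 2 - 1 + (9 + 4 * Real.log (1 / δ)) * (t - 1) ^ 2 := by
          nlinarith [sq_nonneg (t - 1)]

theorem sq_mul_log_sq_le {δ h m : ℝ} (hδ : 0 < δ) (hδ1 : δ ≤ 1) (hh : 0 ≤ h) (hm : 0 < m)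
    (hhm : δ * h ≤ m) :
    h ^ 2 * Real.log (h ^ 2) ≤
      h ^ 2 * Real.log (m ^ 2) + h ^ 2 - m ^ 2 + logSobolevConst δ * (h - m) ^ 2 := by
  rcases hh.eq_or_lt with rfl | hh
  · have := two_mul_sq_mul_log_le hδ hδ1 le_rfl (by positivity)
    norm_num at this ⊢
    nlinarith [sq_nonneg m]
  · have hscaled := two_mul_sq_mul_log_le hδ hδ1 (div_pos hh hm).le
      (by rw [div_le_div_iff₀ hm hδ]; linarith)
    rw [Real.log_div hh.ne' hm.ne'] at hscaled
    have := mul_le_mul_of_nonneg_left hscaled (sq_nonneg m)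
    rw [Real.log_pow, Real.log_pow]
    field_simp at this
    push_cast
    linarith

section OneCoordinate

variable [Finite α] [MeasurableSingletonClass α] {ν : Measure α} [IsProbabilityMeasure ν]

theorem hasLogSobolev_of_forall_le_real_singleton {δ : ℝ} (hδ : 0 < δ)
    (hν : ∀ a, δ ≤ ν.real {a}) : HasLogSobolev ν (logSobolevConst δ) := by
  intro g
  set m := ∫ a, |g a| ∂ν with hm_def
  have hgm : ∀ a, δ * |g a| ≤ m := fun a => calc
    δ * |g a| ≤ ν.real {a} * |g a| := by gcongr; exact hν a
    _ = ∫ b in {a}, |g b| ∂ν := by rw [integral_singleton, smul_eq_mul]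
    _ ≤ m := setIntegral_le_integral .of_finite (.of_forall fun _ => abs_nonneg _)
  obtain ⟨a₀⟩ := ν.nonempty_of_neZero
  have hδ1 : δ ≤ 1 := (hν a₀).trans measureReal_le_one
  have hK : 0 ≤ logSobolevConst δ := by
    have := Real.log_nonneg ((one_le_div₀ hδ).2 hδ1)
    unfold logSobolevConst
    positivity
  have hm : 0 ≤ m := integral_nonneg fun _ => abs_nonneg _
  rcases hm.eq_or_lt with hm | hm
  · have hg : g = 0 := funext fun a => abs_nonpos_iff.1 <|
      nonpos_of_mul_nonpos_right ((hgm a).trans_eq hm.symm) hδ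
    simp [hg, entropyFunctional]
  have htangent := mul_log_add_sub_le_mul_log (x := ∫ a, g a ^ 2 ∂ν)
    (integral_nonneg fun _ => sq_nonneg _) (pow_pos hm 2)
  have hpointwise : ∀ a, g a ^ 2 * Real.log (g a ^ 2) ≤
      g a ^ 2 * (Real.log (m ^ 2) + 1 + logSobolevConst δ)
        - |g a| * (2 * logSobolevConst δ * m) + (logSobolevConst δ - 1) * m ^ 2 := fun a => by
    have := sq_mul_log_sq_le hδ hδ1 (abs_nonneg (g a)) hm (hgm a)
    rw [sub_sq, sq_abs] at this
    linarith
  have hintegral := integral_mono (μ := ν) .of_finite .of_finite hpointwise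
  rw [integral_add .of_finite .of_finite, integral_sub .of_finite .of_finite, integral_mul_const,
    integral_mul_const, integral_const, probReal_univ, one_smul, ← hm_def] at hintegral
  have hmean : (∫ a, g a ∂ν) ^ 2 ≤ m ^ 2 :=
    sq_le_sq.2 (abs_integral_le_integral_abs.trans (le_abs_self m))
  rw [variance_eq_sub .of_discrete, entropyFunctional]
  simp only [Pi.pow_apply]
  nlinarith [mul_le_mul_of_nonneg_left hmean hK]

theorem mul_integral_sq_sub_le_entropyFunctional {t : ℝ} (ht : 0 < t) (g : α → ℝ) :
    (Real.log t + 1) * ∫ a, g a ^ 2 ∂ν - t * (∫ a, |g a| ∂ν) ^ 2 ≤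
      entropyFunctional ν (fun a => g a ^ 2) := by
  have hsq : 0 ≤ ∫ a, g a ^ 2 ∂ν := integral_nonneg fun _ => sq_nonneg _
  rcases hsq.eq_or_lt with hA | hA
  · have hlog : ∫ a, g a ^ 2 * Real.log (g a ^ 2) ∂ν = 0 := by
      rw [eq_comm, integral_eq_zero_iff_of_nonneg (fun _ => sq_nonneg _) .of_finite] at hA
      refine integral_eq_zero_of_ae (hA.mono fun a ha => ?_)
      simp_all
    simp only [entropyFunctional, ← hA, hlog]
    simpa using mul_nonneg ht.le (sq_nonneg (∫ a, |g a| ∂ν))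
  set A := ∫ a, g a ^ 2 ∂ν
  have hc : 0 < √(A * t) := by positivity
  have hpointwise : ∀ a, g a ^ 2 * (2 * Real.log √(A * t) + 2) - |g a| * (2 * √(A * t)) ≤
      g a ^ 2 * Real.log (g a ^ 2) := fun a => by
    have := mul_le_mul_of_nonneg_left (mul_log_add_sub_le_mul_log (abs_nonneg (g a)) hc)
      (abs_nonneg (g a))
    rw [← sq_abs, Real.log_pow]
    push_cast
    linarith
  have hintegral := integral_mono (μ := ν) .of_finite .of_finite hpointwise
  rw [integral_sub .of_finite .of_finite, integral_mul_const, integral_mul_const,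
    Real.log_sqrt (by positivity), Real.log_mul hA.ne' ht.ne', Real.sqrt_mul hA.le] at hintegral
  have hamgm := sq_nonneg (√A - √t * ∫ a, |g a| ∂ν)
  rw [sub_sq, mul_pow, Real.sq_sqrt hA.le, Real.sq_sqrt ht.le] at hamgm
  rw [entropyFunctional]
  linarith

end OneCoordinate

section Tensorization

variable {ι : Type*} [Fintype ι] [DecidableEq ι] {α : ι → Type*} [∀ i, MeasurableSpace (α i)]
  [∀ i, Finite (α i)] [∀ i, MeasurableSingletonClass (α i)] {μ : ∀ i, Measure (α i)}
  [∀ i, IsProbabilityMeasure (μ i)] {s t : Finset ι} {F g : (∀ i, α i) → ℝ}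

theorem ae_coordAvg_ne_zero (hF : ∀ x, 0 ≤ F x) :
    ∀ᵐ x ∂Measure.pi μ, F x ≠ 0 → coordAvg μ s F x ≠ 0 := by
  set g : (∀ i, α i) → ℝ := fun x => if coordAvg μ s F x = 0 then 1 else 0 with hg_def
  have hg : DependsOn g (s : Set ι)ᶜ := fun x y hxy => by
    simp only [hg_def, dependsOn_coordAvg hxy]
  have hgF : ∫ x, g x * F x ∂Measure.pi μ = 0 := by
    have hzero : ∀ x, g x * coordAvg μ s F x = 0 := fun x => by
      simp only [hg_def]
      split_ifs with h <;> simp [h]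
    simp [← integral_mul_coordAvg hg, hzero]
  have hnonneg : ∀ x, 0 ≤ g x * F x := fun x =>
    mul_nonneg (by simp only [hg_def]; split_ifs <;> simp) (hF x)
  rw [integral_eq_zero_iff_of_nonneg hnonneg .of_finite] at hgF
  refine hgF.mono fun x hx hFx hAx => hFx ?_
  simpa [hg_def, hAx] using hx

theorem integral_coordAvg_div_mul_coordAvg_le (hF : ∀ x, 0 ≤ F x) :
    ∫ x, coordAvg μ t F x / coordAvg μ (s ∪ t) F x * coordAvg μ s F x ∂Measure.pi μ ≤
      ∫ x, F x ∂Measure.pi μ := by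
  have hdep : DependsOn (fun x => coordAvg μ t F x / coordAvg μ (s ∪ t) F x) (t : Set ι)ᶜ :=
    fun x y hxy => congrArg₂ (· / ·) (dependsOn_coordAvg hxy) <|
      dependsOn_coordAvg fun i hi => hxy i fun hit => hi (Finset.mem_union_right s hit)
  rw [← integral_mul_coordAvg hdep, coordAvg_coordAvg, Finset.union_comm,
    ← integral_coordAvg (s := t) (f := F)]
  refine integral_mono .of_finite .of_finite fun x => ?_
  beta_reduce
  rw [div_mul_comm]
  exact mul_le_of_le_one_left (coordAvg_nonneg hF x) (div_self_le_one _)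

/- Writing `A_s` for the average over `s`, apply `log u ≤ u - 1` to
`u = A_s F * A_t F / (F * A_{s ∪ t} F)`. -/
theorem integral_mul_log_coordAvg_add_le (hF : ∀ x, 0 ≤ F x) :
    ∫ x, F x * Real.log (coordAvg μ s F x) ∂Measure.pi μ +
        ∫ x, F x * Real.log (coordAvg μ t F x) ∂Measure.pi μ ≤
      ∫ x, F x * Real.log (F x) ∂Measure.pi μ +
        ∫ x, F x * Real.log (coordAvg μ (s ∪ t) F x) ∂Measure.pi μ := by
  have hratio := integral_coordAvg_div_mul_coordAvg_le (μ := μ) (s := s) (t := t) hF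
  set G := coordAvg μ s F
  set A := coordAvg μ t F
  set B := coordAvg μ (s ∪ t) F
  have hG : ∀ x, 0 ≤ G x := coordAvg_nonneg hF
  have hA : ∀ x, 0 ≤ A x := coordAvg_nonneg hF
  have hB : ∀ x, 0 ≤ B x := coordAvg_nonneg hF
  have hpointwise : ∀ᵐ x ∂Measure.pi μ, F x * Real.log (G x) + F x * Real.log (A x) -
      (F x * Real.log (F x) + F x * Real.log (B x)) ≤ A x / B x * G x - F x := by
    filter_upwards [ae_coordAvg_ne_zero (s := s) hF, ae_coordAvg_ne_zero (s := t) hF,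
      ae_coordAvg_ne_zero (s := s ∪ t) hF] with x hGx hAx hBx
    rcases eq_or_ne (F x) 0 with hFx | hFx
    · simpa [hFx] using mul_nonneg (div_nonneg (hA x) (hB x)) (hG x)
    · have hG' := (hG x).lt_of_ne' (hGx hFx)
      have hA' := (hA x).lt_of_ne' (hAx hFx)
      have hB' := (hB x).lt_of_ne' (hBx hFx)
      have hF' := (hF x).lt_of_ne' hFx
      have := mul_log_add_sub_le_mul_log hF'.le (div_pos (mul_pos hA' hG') hB')
      rw [Real.log_div (mul_pos hA' hG').ne' hB'.ne', Real.log_mul hA'.ne' hG'.ne'] at this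
      rw [div_mul_eq_mul_div]
      linarith
  have hintegral := integral_mono_ae .of_finite .of_finite hpointwise
  rw [integral_sub .of_finite .of_finite, integral_add .of_finite .of_finite,
    integral_add .of_finite .of_finite, integral_sub .of_finite .of_finite] at hintegral
  linarith

theorem integral_entropyFunctional_update (F : (∀ i, α i) → ℝ) (i : ι) :
    ∫ x, entropyFunctional (μ i) (fun a => F (update x i a)) ∂Measure.pi μ =
      ∫ x, F x * Real.log (F x) ∂Measure.pi μ -
        ∫ x, F x * Real.log (coordAvg μ {i} F x) ∂Measure.pi μ := by
  have hentropy : ∀ x, entropyFunctional (μ i) (fun a => F (update x i a)) =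
      coordAvg μ {i} (fun y => F y * Real.log (F y)) x -
        Real.log (coordAvg μ {i} F x) * coordAvg μ {i} F x := fun x => by
    rw [coordAvg_singleton, coordAvg_singleton, mul_comm (Real.log _)]
    rfl
  have hdep : DependsOn (fun x => Real.log (coordAvg μ {i} F x)) (({i} : Finset ι) : Set ι)ᶜ :=
    fun x y hxy => congrArg Real.log (dependsOn_coordAvg hxy)
  simp only [hentropy]
  rw [integral_sub .of_finite .of_finite, integral_coordAvg, integral_mul_coordAvg hdep]
  simp only [mul_comm]

theorem entropyFunctional_pi_le (hF : ∀ x, 0 ≤ F x) :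
    entropyFunctional (Measure.pi μ) F ≤
      ∑ i, ∫ x, entropyFunctional (μ i) (fun a => F (update x i a)) ∂Measure.pi μ := by
  suffices h : ∀ s : Finset ι, ∫ x, F x * Real.log (F x) ∂Measure.pi μ -
      ∫ x, F x * Real.log (coordAvg μ s F x) ∂Measure.pi μ ≤
      ∑ i ∈ s, ∫ x, entropyFunctional (μ i) (fun a => F (update x i a)) ∂Measure.pi μ by
    simpa [coordAvg_univ, integral_mul_const, entropyFunctional] using h .univ
  intro s
  induction s using Finset.induction_on with
  | empty => simp [coordAvg_empty]
  | insert i s hi ih =>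
    have := integral_mul_log_coordAvg_add_le (μ := μ) (s := {i}) (t := s) hF
    rw [Finset.sum_insert hi, integral_entropyFunctional_update, Finset.insert_eq]
    linarith

/-- The `L²` influence `𝔼[Var_i f]` of the `i`-th coordinate on `f`; the sum over `i` is the
Dirichlet form of the product. -/
noncomputable def coordInfluence (μ : ∀ i, Measure (α i)) (f : (∀ i, α i) → ℝ) (i : ι) : ℝ :=
  ∫ x, (f x - coordAvg μ {i} f x) ^ 2 ∂Measure.pi μ

theorem entropyFunctional_sq_le_sum_coordInfluence {K : ℝ} (hK : ∀ i, HasLogSobolev (μ i) K)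
    (g : (∀ i, α i) → ℝ) :
    entropyFunctional (Measure.pi μ) (fun x => g x ^ 2) ≤ K * ∑ i, coordInfluence μ g i := by
  refine (entropyFunctional_pi_le fun x => sq_nonneg (g x)).trans ?_
  rw [Finset.mul_sum]
  refine Finset.sum_le_sum fun i _ => ?_
  calc ∫ x, entropyFunctional (μ i) (fun a => g (update x i a) ^ 2) ∂Measure.pi μ
      ≤ ∫ x, K * Var[fun a => g (update x i a); μ i] ∂Measure.pi μ :=
        integral_mono .of_finite .of_finite fun x => hK i _
    _ = K * ∫ x, (coordAvg μ {i} (fun y => g y ^ 2) x - coordAvg μ {i} g x ^ 2) ∂Measure.pi μ := by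
        rw [integral_const_mul]
        congr! 3 with _
        rw [variance_eq_sub .of_discrete, coordAvg_singleton, coordAvg_singleton]
        rfl
    _ = K * coordInfluence μ g i := by
        rw [integral_sub .of_finite .of_finite, integral_coordAvg, coordInfluence,
          integral_sub_coordAvg_sq]

end Tensorization

end LogSobolev

section KKL

open ProbabilityTheory

variable {ι : Type*} [Fintype ι] [DecidableEq ι] {α : ι → Type*} [∀ i, MeasurableSpace (α i)]
  {μ : ∀ i, Measure (α i)}

theorem coordInfluence_nonneg (f : (∀ i, α i) → ℝ) (i : ι) : 0 ≤ coordInfluence μ f i :=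
  integral_nonneg fun _ => sq_nonneg _

variable [∀ i, Finite (α i)] [∀ i, MeasurableSingletonClass (α i)]
  [∀ i, IsProbabilityMeasure (μ i)]

theorem coordInfluence_sub_coordAvg (s : Finset ι) (f : (∀ i, α i) → ℝ) (i : ι) :
    coordInfluence μ (fun x => f x - coordAvg μ s f x) i =
      coordInfluence μ f i - coordInfluence μ (coordAvg μ s f) i := by
  have hcomm : ∀ x, coordAvg μ s (fun y => f y - coordAvg μ {i} f y) x =
      coordAvg μ s f x - coordAvg μ {i} (coordAvg μ s f) x := fun x => by
    rw [coordAvg_sub, coordAvg_coordAvg, coordAvg_coordAvg, Finset.union_comm]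
  have hpyth := integral_sub_coordAvg_sq (μ := μ) (s := s)
    (f := fun x => f x - coordAvg μ {i} f x)
  simp only [hcomm] at hpyth
  simp only [coordInfluence, ← hpyth, coordAvg_sub]
  congr! 3 with x
  ring

theorem integral_abs_coordAvg_sub_le (s : Finset ι) (f : (∀ i, α i) → ℝ) (i : ι) :
    ∫ x, |coordAvg μ s f x - coordAvg μ {i} (coordAvg μ s f) x| ∂Measure.pi μ ≤
      ∫ x, |f x - coordAvg μ {i} f x| ∂Measure.pi μ := by
  have h := integral_abs_coordAvg_le (μ := μ) (s := s) (f := fun x => f x - coordAvg μ {i} f x)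
  rwa [coordAvg_sub, coordAvg_coordAvg, Finset.union_comm, ← coordAvg_coordAvg] at h

/- Telescoping over `s`: the log-Sobolev inequality and the entropy lower bound are applied to each
martingale difference `A_s f - A_{s ∪ {i}} f`. -/
theorem mul_integral_sq_sub_coordAvg_sq_le {K : ℝ} (hK : ∀ i, HasLogSobolev (μ i) K) {t : ℝ}
    (ht : 0 < t) (f : (∀ i, α i) → ℝ) (s : Finset ι) :
    (Real.log t + 1) * (∫ x, f x ^ 2 ∂Measure.pi μ - ∫ x, coordAvg μ s f x ^ 2 ∂Measure.pi μ) -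
        t * ∑ i ∈ s, (∫ x, |f x - coordAvg μ {i} f x| ∂Measure.pi μ) ^ 2 ≤
      K * ∑ i, (coordInfluence μ f i - coordInfluence μ (coordAvg μ s f) i) := by
  induction s using Finset.induction_on with
  | empty => simp [coordAvg_empty]
  | insert i s hi ih =>
    set h := coordAvg μ s f with hh
    have havg : coordAvg μ (insert i s) f = coordAvg μ {i} h := by
      rw [hh, coordAvg_coordAvg, Finset.insert_eq]
    have hstep := (mul_integral_sq_sub_le_entropyFunctional (ν := Measure.pi μ) ht
      fun x => h x - coordAvg μ {i} h x).trans (entropyFunctional_sq_le_sum_coordInfluence hK _)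
    simp only [integral_sub_coordAvg_sq, coordInfluence_sub_coordAvg] at hstep
    have hL1 := mul_le_mul_of_nonneg_left (pow_le_pow_left₀
      (integral_nonneg fun _ => abs_nonneg _) (integral_abs_coordAvg_sub_le (μ := μ) s f i) 2) ht.le
    rw [Finset.sum_insert hi, havg]
    simp only [Finset.sum_sub_distrib] at ih hstep ⊢
    linarith

theorem falik_samorodnitsky {K : ℝ} (hK : ∀ i, HasLogSobolev (μ i) K) {t : ℝ} (ht : 0 < t)
    (f : (∀ i, α i) → ℝ) :
    (Real.log t + 1) * Var[f; Measure.pi μ] -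
        t * ∑ i, (∫ x, |f x - coordAvg μ {i} f x| ∂Measure.pi μ) ^ 2 ≤
      K * ∑ i, coordInfluence μ f i := by
  have hconst : ∀ i, coordInfluence μ (coordAvg μ .univ f) i = 0 := fun i => by
    simp only [coordInfluence, coordAvg_coordAvg, Finset.union_eq_right.2 (Finset.subset_univ _),
      sub_self, zero_pow two_ne_zero, integral_zero]
  have h := mul_integral_sq_sub_coordAvg_sq_le hK ht f .univ
  simp only [hconst, sub_zero] at h
  rw [variance_eq_sub .of_discrete]
  simpa [coordAvg_univ] using h

theorem integral_abs_sub_coordAvg_indicator (A : Set (∀ i, α i)) (i : ι) :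
    ∫ x, |A.indicator 1 x - coordAvg μ {i} (A.indicator 1) x| ∂Measure.pi μ =
      2 * coordInfluence μ (A.indicator 1) i := by
  set f : (∀ i, α i) → ℝ := A.indicator 1 with hf_def
  set a := coordAvg μ {i} f with ha_def
  have hf : ∀ x, f x = 0 ∨ f x = 1 := fun x => by
    by_cases hx : x ∈ A <;> simp [hf_def, hx]
  have ha0 : ∀ x, 0 ≤ a x := coordAvg_nonneg fun x => by rcases hf x with h | h <;> simp [h]
  have ha1 : ∀ x, a x ≤ 1 := fun x => by
    rw [ha_def, coordAvg_singleton]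
    refine (integral_mono .of_finite .of_finite fun b => ?_).trans_eq (b := ∫ _, 1 ∂μ i) (by simp)
    rcases hf (Function.update x i b) with h | h <;> simp [h]
  have habs : ∀ x, |f x - a x| = 2 * (f x - a x) ^ 2 + (a x - f x) + 2 * (a x * (f x - a x)) :=
    fun x => by
      rcases hf x with h | h <;> rw [h]
      · rw [zero_sub, abs_neg, abs_of_nonneg (ha0 x)]
        ring
      · rw [abs_of_nonneg (sub_nonneg.2 (ha1 x))]
        ring
  have horth : ∫ x, a x * (f x - a x) ∂Measure.pi μ = 0 := by
    have h := integral_mul_coordAvg (μ := μ) (f := f) (dependsOn_coordAvg (s := {i}) (f := f)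
      (μ := μ))
    simp only [mul_sub]
    rw [integral_sub .of_finite .of_finite, sub_eq_zero]
    exact h.symm
  simp only [habs]
  rw [integral_add .of_finite .of_finite, integral_add .of_finite .of_finite,
    integral_sub .of_finite .of_finite, integral_const_mul, integral_const_mul, horth, ha_def,
    integral_coordAvg, coordInfluence]
  ring

theorem variance_indicator_one {Ω : Type*} [MeasurableSpace Ω] {ν : Measure Ω}
    [IsProbabilityMeasure ν] {A : Set Ω} (hA : MeasurableSet A) :
    Var[A.indicator 1; ν] = ν.real A * (1 - ν.real A) := by
  have hsq : (A.indicator (1 : Ω → ℝ)) ^ 2 = A.indicator 1 := by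
    ext x
    by_cases hx : x ∈ A <;> simp [hx]
  rw [variance_eq_sub ((memLp_const (1 : ℝ)).indicator hA : MemLp (A.indicator (1 : Ω → ℝ)) 2 ν),
    hsq, integral_indicator_one hA]
  ring

theorem sq_log_lt_sixteen_mul_sqrt {x : ℝ} (hx : 1 ≤ x) : Real.log x ^ 2 < 16 * √x := by
  have hpos : 0 < √√x := Real.sqrt_pos.2 (Real.sqrt_pos.2 (by linarith))
  have hlog := Real.log_le_sub_one_of_pos hpos
  rw [Real.log_sqrt (Real.sqrt_nonneg _), Real.log_sqrt (by linarith)] at hlog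
  calc Real.log x ^ 2 < (4 * √√x) ^ 2 :=
        pow_lt_pow_left₀ (by linarith) (Real.log_nonneg hx) two_ne_zero
    _ = 16 * √x := by rw [mul_pow, Real.sq_sqrt (Real.sqrt_nonneg _)]; norm_num

theorem sqrt_mul_four_mul_sq_lt {V K n : ℝ} (hV : 0 < V) (hV4 : 4 * V ≤ 1) (hK : 1 ≤ K)
    (hn : 1 ≤ n) : √n * (n * (4 * (V * (Real.log n / (4 * K * n))) ^ 2)) < V :=
  calc √n * (n * (4 * (V * (Real.log n / (4 * K * n))) ^ 2))
      = V ^ 2 / (4 * K ^ 2 * √n) * Real.log n ^ 2 := by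
        field_simp
        rw [Real.sq_sqrt (by positivity)]
    _ < V ^ 2 / (4 * K ^ 2 * √n) * (16 * √n) := by
        gcongr
        exact sq_log_lt_sixteen_mul_sqrt hn
    _ = V * (4 * V) / K ^ 2 := by
        field_simp
        norm_num
    _ ≤ V := (div_le_self (by positivity) (one_le_pow₀ hK)).trans
        (mul_le_of_le_one_right hV.le hV4)

theorem exists_le_coordInfluence_indicator {K : ℝ} (hK1 : 1 ≤ K)
    (hK : ∀ i, HasLogSobolev (μ i) K) {n : ℕ} (hn : 0 < n) (hcard : Fintype.card ι ≤ n)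
    {A : Set (∀ i, α i)}
    (hA : 0 < (Measure.pi μ).real A * (1 - (Measure.pi μ).real A)) :
    ∃ i, (Measure.pi μ).real A * (1 - (Measure.pi μ).real A) * (Real.log n / (4 * K * n)) ≤
      coordInfluence μ (A.indicator 1) i := by
  set V := (Measure.pi μ).real A * (1 - (Measure.pi μ).real A) with hV
  set ℓ := V * (Real.log n / (4 * K * n)) with hℓ
  by_contra! hsmall
  have hn1 : (1 : ℝ) ≤ n := by exact_mod_cast hn
  have hlog : 0 ≤ Real.log n := Real.log_nonneg hn1
  have : 0 ≤ ℓ := by positivity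
  have hsum : ∑ i, coordInfluence μ (A.indicator 1) i ≤ n * ℓ := calc
    _ ≤ ∑ _ : ι, ℓ := Finset.sum_le_sum fun i _ => (hsmall i).le
    _ = Fintype.card ι * ℓ := by simp
    _ ≤ n * ℓ := by gcongr
  have hsumsq : ∑ i, (2 * coordInfluence μ (A.indicator 1) i) ^ 2 ≤ n * (4 * ℓ ^ 2) := calc
    _ ≤ ∑ _ : ι, (2 * ℓ) ^ 2 := Finset.sum_le_sum fun i _ => by
        have := coordInfluence_nonneg (μ := μ) (A.indicator 1) i
        gcongr
        exact (hsmall i).le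
    _ = Fintype.card ι * (4 * ℓ ^ 2) := by norm_num [mul_pow]
    _ ≤ n * (4 * ℓ ^ 2) := by gcongr
  have hfs := falik_samorodnitsky hK (t := √n) (by positivity) (A.indicator 1)
  rw [variance_indicator_one A.toFinite.measurableSet, ← hV] at hfs
  simp only [integral_abs_sub_coordAvg_indicator] at hfs
  rw [Real.log_sqrt (by positivity)] at hfs
  have hlinear : K * (n * ℓ) = V * Real.log n / 4 := by
    rw [hℓ]
    field_simp
  have hV4 : 4 * V ≤ 1 := by nlinarith [sq_nonneg (2 * (Measure.pi μ).real A - 1)]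
  have hquadratic : √n * (n * (4 * ℓ ^ 2)) < V := sqrt_mul_four_mul_sq_lt hA hV4 hK1 hn1
  have := mul_le_mul_of_nonneg_left hsum (by linarith : 0 ≤ K)
  have := mul_le_mul_of_nonneg_left hsumsq (Real.sqrt_nonneg n)
  nlinarith [mul_nonneg hA.le hlog]

end KKL

section Boosting

open Function

theorem exists_card_le_and_le_of_increment {ι : Type*} [DecidableEq ι] {P : Finset ι → ℝ}
    {θ γ : ℝ} (hγ : 0 < γ) (h0 : 0 ≤ P ∅) (h1 : ∀ S, P S ≤ 1)
    (hstep : ∀ S, P ∅ ≤ P S → P S < θ → ∃ i, P S + γ ≤ P (insert i S)) :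
    ∃ S, (S.card : ℝ) ≤ 1 / γ + 1 ∧ θ ≤ P S := by
  by_contra! hsmall
  have hgrow : ∀ T : ℕ, (T : ℝ) ≤ 1 / γ + 2 →
      ∃ S : Finset ι, S.card ≤ T ∧ P ∅ + T * γ ≤ P S := fun T => by
    induction T with
    | zero => exact fun _ => ⟨∅, by simp⟩
    | succ T ih =>
      intro hT
      push_cast at hT
      obtain ⟨S, hcard, hS⟩ := ih (by linarith)
      have hcard' : (S.card : ℝ) ≤ T := by exact_mod_cast hcard
      obtain ⟨i, hi⟩ := hstep S (by nlinarith [T.cast_nonneg (α := ℝ)])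
        (hsmall S (by linarith))
      refine ⟨insert i S, (Finset.card_insert_le _ _).trans (by omega), ?_⟩
      push_cast
      linarith
  have hγ' : 0 < 1 / γ := by positivity
  obtain ⟨S, -, hS⟩ := hgrow (⌊1 / γ⌋₊ + 1)
    (by push_cast; linarith [Nat.floor_le hγ'.le])
  have hfloor : 1 < (⌊1 / γ⌋₊ + 1) * γ := (div_lt_iff₀ hγ).1 (Nat.lt_floor_add_one _)
  push_cast at hS
  linarith [h1 S]

variable {ι R : Type*} {α : ι → Type*} {f : (∀ i, α i) → R} {S T : Finset ι} {b : R}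

/-- The inputs from which the coalition `S` can force the outcome `b` of `f`; its measure is the
influence of `S` towards `b`. -/
def controlSet (f : (∀ i, α i) → R) (S : Finset ι) (b : R) : Set (∀ i, α i) :=
  {x | ∃ y, (∀ j ∉ S, y j = x j) ∧ f y = b}

theorem controlSet_mono (h : S ⊆ T) : controlSet f S b ⊆ controlSet f T b :=
  fun _ ⟨y, hyx, hy⟩ => ⟨y, fun j hj => hyx j fun hjS => hj (h hjS), hy⟩

theorem controlSet_empty : controlSet f ∅ b = f ⁻¹' {b} := by
  ext x
  simp [controlSet, ← funext_iff]

theorem controlSet_insert [DecidableEq ι] (i : ι) :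
    controlSet f (insert i S) b = {x | ∃ a, update x i a ∈ controlSet f S b} := by
  ext x
  constructor
  · rintro ⟨y, hyx, hy⟩
    refine ⟨y i, y, fun j hj => ?_, hy⟩
    rcases eq_or_ne j i with rfl | hji
    · simp
    · simpa [hji] using hyx j (by simp [hji, hj])
  · rintro ⟨a, y, hyx, hy⟩
    refine ⟨y, fun j hj => ?_, hy⟩
    simp only [Finset.mem_insert, not_or] at hj
    simpa [hj.1] using hyx j hj.2

variable [Fintype ι] [∀ i, MeasurableSpace (α i)] [∀ i, Finite (α i)]
  [∀ i, MeasurableSingletonClass (α i)] {μ : ∀ i, Measure (α i)} [∀ i, IsProbabilityMeasure (μ i)]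

theorem measureReal_add_coordInfluence_le [DecidableEq ι] (A : Set (∀ i, α i)) (i : ι) :
    (Measure.pi μ).real A + coordInfluence μ (A.indicator 1) i ≤
      (Measure.pi μ).real {x | ∃ a, update x i a ∈ A} := by
  set B : Set (∀ i, α i) := {x | ∃ a, update x i a ∈ A}
  set p := coordAvg μ {i} (A.indicator 1) with hp
  have hpB : ∀ x, 2 * p x - p x ^ 2 ≤ B.indicator 1 x := fun x => by
    by_cases hx : x ∈ B
    · rw [Set.indicator_of_mem hx, Pi.one_apply]
      linarith [sq_nonneg (1 - p x)]
    · have hpx : p x = 0 := by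
        rw [hp, coordAvg_singleton]
        exact integral_eq_zero_of_ae <| .of_forall fun a =>
          Set.indicator_of_notMem (fun ha => hx ⟨a, ha⟩) _
      simp [hx, hpx]
  have hintegral := integral_mono (μ := Measure.pi μ) .of_finite .of_finite hpB
  have hsq : ∀ x, A.indicator (1 : (∀ i, α i) → ℝ) x ^ 2 = A.indicator 1 x := fun x => by
    by_cases hx : x ∈ A <;> simp [hx]
  rw [integral_sub .of_finite .of_finite, integral_const_mul, hp, integral_coordAvg,
    integral_indicator_one B.toFinite.measurableSet] at hintegral
  rw [coordInfluence, integral_sub_coordAvg_sq]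
  simp only [hsq]
  rw [integral_indicator_one A.toFinite.measurableSet] at hintegral ⊢
  linarith

theorem exists_controlSet_boost {K : ℝ} (hK1 : 1 ≤ K) (hK : ∀ i, HasLogSobolev (μ i) K) {n : ℕ}
    (hn : 1 < n) (hcard : Fintype.card ι ≤ n) {r η : ℝ} (hr : 0 < r) (hη : 0 < η)
    (hstart : 1 / r ≤ (Measure.pi μ).real (f ⁻¹' {b})) :
    ∃ S : Finset ι, (S.card : ℝ) ≤ (r + 1 / η) / (Real.log n / (4 * K * n)) + 1 ∧
      1 - η ≤ (Measure.pi μ).real (controlSet f S b) := by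
  classical
  set Λ := Real.log n / (4 * K * n)
  have hΛ : 0 < Λ := div_pos (Real.log_pos (by exact_mod_cast hn)) (by positivity)
  rw [← controlSet_empty] at hstart
  have hr0 : 0 < 1 / r := by positivity
  obtain ⟨S, hS, hboost⟩ := exists_card_le_and_le_of_increment
    (P := fun S => (Measure.pi μ).real (controlSet f S b)) (θ := 1 - η) (γ := Λ / (r + 1 / η))
    (by positivity) measureReal_nonneg (fun S => measureReal_le_one) fun S hS hSη => by
      set p := (Measure.pi μ).real (controlSet f S b)
      have hp : 0 < p := by linarith
      have hp1 : 0 < 1 - p := by linarith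
      have hvar : 1 / (r + 1 / η) ≤ p * (1 - p) := by
        refine (one_div_le (by positivity) (by positivity)).1 ?_
        calc 1 / (p * (1 - p)) = 1 / p + 1 / (1 - p) := by
              field_simp
              ring
          _ ≤ r + 1 / η := by
              gcongr
              · rw [one_div_le hp hr]
                linarith
              · linarith
      obtain ⟨i, hi⟩ := exists_le_coordInfluence_indicator hK1 hK (by omega) hcard
        (A := controlSet f S b) (by positivity)
      have hgain := measureReal_add_coordInfluence_le (μ := μ) (controlSet f S b) i
      rw [← controlSet_insert] at hgain
      refine ⟨i, le_trans ?_ hgain⟩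
      have := mul_le_mul_of_nonneg_right hvar hΛ.le
      rw [one_div_mul_eq_div] at this
      linarith
  rw [one_div_div] at hS
  exact ⟨S, hS, hboost⟩

end Boosting

section RareCoordinates

open Function

theorem exists_one_div_card_le_measureReal {Ω R : Type*} [MeasurableSpace Ω] [Fintype R]
    {ν : Measure Ω} [IsProbabilityMeasure ν] {E : R → Set Ω} (hE : ∀ ω, ∃ b, ω ∈ E b) :
    ∃ b, 1 / (Fintype.card R : ℝ) ≤ ν.real (E b) := by
  obtain ⟨ω⟩ := ν.nonempty_of_neZero
  obtain ⟨b₀, -⟩ := hE ω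
  have : Nonempty R := ⟨b₀⟩
  have hsum : ∑ _ : R, 1 / (Fintype.card R : ℝ) ≤ ∑ b, ν.real (E b) := calc
    _ = ν.real (⋃ b, E b) := by
      rw [Set.iUnion_eq_univ_iff.2 hE, probReal_univ]
      simp
    _ ≤ ∑ b, ν.real (E b) := measureReal_iUnion_fintype_le E
  obtain ⟨b, -, hb⟩ := Finset.exists_le_of_sum_le Finset.univ_nonempty hsum
  exact ⟨b, hb⟩

variable {Ω T κ : Type*} [MeasurableSpace Ω] [Finite Ω] [MeasurableSingletonClass Ω] {ρ : Measure Ω}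
  [IsProbabilityMeasure ρ] [Fintype T]

theorem integral_one_sub_biUnion_le [DecidableEq κ] {u : Finset κ → ℝ} (hu : Monotone u)
    (hu0 : ∀ S, 0 ≤ u S) (hu1 : ∀ S, u S ≤ 1) (S : Ω → Finset κ) {k : ℕ} {η : ℝ} (hη0 : 0 ≤ η)
    (hη1 : η ≤ 1) (hη : 1 / 2 ≤ (1 - (1 - η) ^ k) ^ Fintype.card T) :
    ∫ W : T → Ω, (1 - u (Finset.univ.biUnion fun t => S (W t))) ∂Measure.pi (fun _ => ρ) ≤
      η + 2 * (1 - ∫ ω, u (S ω) ^ k ∂ρ) ^ Fintype.card T := by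
  have hfactor : ∀ ω, 0 ≤ 1 - u (S ω) ^ k := fun ω => sub_nonneg.2 (pow_le_one₀ (hu0 _) (hu1 _))
  have hpointwise : ∀ W : T → Ω, 1 - u (Finset.univ.biUnion fun t => S (W t)) ≤
      η + 2 * ∏ t, (1 - u (S (W t)) ^ k) := fun W => by
    set U := Finset.univ.biUnion fun t => S (W t)
    have hprod : 0 ≤ ∏ t, (1 - u (S (W t)) ^ k) := Finset.prod_nonneg fun t _ => hfactor (W t)
    rcases le_or_gt (1 - η) (u U) with hlarge | hsmall
    · linarith
    · have hhalf : 1 / 2 ≤ ∏ t, (1 - u (S (W t)) ^ k) := calc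
        1 / 2 ≤ ∏ _ : T, (1 - (1 - η) ^ k) := by simpa using hη
        _ ≤ ∏ t, (1 - u (S (W t)) ^ k) := by
          refine Finset.prod_le_prod
            (fun _ _ => sub_nonneg.2 (pow_le_one₀ (by linarith) (by linarith))) fun t _ => ?_
          have hle : u (S (W t)) ≤ 1 - η :=
            (hu (Finset.subset_biUnion_of_mem (fun t => S (W t)) (Finset.mem_univ t))).trans
              hsmall.le
          gcongr
          exact hu0 _
      linarith [hu0 U]
  calc _ ≤ ∫ W : T → Ω, (η + 2 * ∏ t, (1 - u (S (W t)) ^ k)) ∂Measure.pi (fun _ => ρ) :=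
        integral_mono .of_finite .of_finite hpointwise
    _ = η + 2 * (1 - ∫ ω, u (S ω) ^ k ∂ρ) ^ Fintype.card T := by
        rw [integral_add .of_finite .of_finite, integral_const_mul,
          integral_fintype_prod_eq_pow fun ω => 1 - u (S ω) ^ k,
          integral_sub .of_finite .of_finite]
        simp

theorem integral_card_biUnion_le [DecidableEq κ] (S : Ω → Finset κ) :
    ∫ W : T → Ω, ((Finset.univ.biUnion fun t => S (W t)).card : ℝ) ∂Measure.pi (fun _ => ρ) ≤
      Fintype.card T * ∫ ω, ((S ω).card : ℝ) ∂ρ := calc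
  _ ≤ ∫ W : T → Ω, ∑ t, ((S (W t)).card : ℝ) ∂Measure.pi (fun _ => ρ) :=
      integral_mono .of_finite .of_finite fun W => by
        rw [← Nat.cast_sum, Nat.cast_le]
        exact Finset.card_biUnion_le
  _ = Fintype.card T * ∫ ω, ((S ω).card : ℝ) ∂ρ := by
      rw [integral_finsetSum _ fun t _ => .of_finite]
      simp [integral_comp_eval (μ := fun _ : T => ρ) (f := fun ω => ((S ω).card : ℝ)) .of_discrete]

variable {R J : Type*} [Fintype κ] [Fintype R] [Fintype J]

/-- The coordinates of `z` carrying their rare value `r i`. -/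
def rareCoords (r z : κ → Bool) : Finset κ := {i | z i = r i}

/-- The coordinates that are rare in one of the samples `Y b j` with `b ∈ B`. -/
def rareUnion [DecidableEq κ] (r : κ → Bool) (B : Finset R) (Y : R → J → κ → Bool) : Finset κ :=
  B.biUnion fun b => Finset.univ.biUnion fun j => rareCoords r (Y b j)

/- If `Y b (c b)` is a counterexample for each `b`, let `y` be rare exactly where one of the chosen
samples is. Then `Y (f y) (c (f y))` and `y` differ only where another chosen sample is rare. -/
theorem exists_forall_mem_controlSet_rareUnion [DecidableEq κ] [DecidableEq R]
    (f : (κ → Bool) → R) (r : κ → Bool) (Y : R → J → κ → Bool) :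
    ∃ b, ∀ j, Y b j ∈ controlSet f (rareUnion r (Finset.univ.erase b) Y) b := by
  by_contra! hfail
  choose c hc using hfail
  set y : κ → Bool := fun i => if ∃ b, Y b (c b) i = r i then r i else !(r i) with hy
  refine hc (f y) ⟨y, fun i hi => ?_, rfl⟩
  by_cases hrare : ∃ b, Y b (c b) i = r i
  · obtain ⟨b, hb⟩ := hrare
    rcases eq_or_ne b (f y) with hbf | hbf
    · rw [← hbf, hb, hy]
      exact if_pos ⟨b, hb⟩
    · refine absurd ?_ hi
      simp only [rareUnion, rareCoords, Finset.mem_biUnion, Finset.mem_filter_univ]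
      exact ⟨b, Finset.mem_erase.2 ⟨hbf, Finset.mem_univ b⟩, c b, Finset.mem_univ _, hb⟩
  · have hyi : y i = !(r i) := if_neg hrare
    rw [hyi, eq_comm, Bool.eq_not]
    exact fun h => hrare ⟨_, h⟩

variable {μ : κ → Measure Bool} [∀ i, IsProbabilityMeasure (μ i)]

theorem exists_one_div_card_le_integral_pow [DecidableEq κ]
    (f : (κ → Bool) → R) (r : κ → Bool) :
    ∃ b, 1 / (Fintype.card R : ℝ) ≤
      ∫ Y : R → J → κ → Bool,
        (Measure.pi μ).real (controlSet f (rareUnion r Finset.univ Y) b) ^ Fintype.card J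
          ∂Measure.pi fun _ => Measure.pi fun _ => Measure.pi μ := by
  classical
  set ρ : Measure (R → J → κ → Bool) := Measure.pi fun _ => Measure.pi fun _ => Measure.pi μ
  obtain ⟨b, hb⟩ := exists_one_div_card_le_measureReal (ν := ρ)
    (exists_forall_mem_controlSet_rareUnion f r)
  refine ⟨b, hb.trans ?_⟩
  set E : Set (R → J → κ → Bool) :=
    {Y | ∀ j, Y b j ∈ controlSet f (rareUnion r (Finset.univ.erase b) Y) b} with hE
  change ρ.real E ≤ _
  rw [← integral_indicator_one E.toFinite.measurableSet, ← integral_coordAvg (s := {b})]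
  refine integral_mono .of_finite .of_finite fun Y => ?_
  set C := controlSet f (rareUnion r (Finset.univ.erase b) Y) b with hC
  have hslice : ∀ z, update Y b z ∈ E ↔ z ∈ Set.univ.pi fun _ => C := fun z => by
    have herase : rareUnion r (Finset.univ.erase b) (update Y b z) =
        rareUnion r (Finset.univ.erase b) Y :=
      Finset.biUnion_congr rfl fun c hc => by rw [update_of_ne (Finset.ne_of_mem_erase hc)]
    simp only [hE, Set.mem_ofPred_eq, herase, update_self, Set.mem_univ_pi, hC]
  have hindicator : ∀ z, E.indicator (1 : (R → J → κ → Bool) → ℝ) (update Y b z) =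
      (Set.univ.pi fun _ : J => C).indicator 1 z := fun z =>
    Set.indicator_eq_indicator (hslice z) rfl
  change coordAvg _ _ _ Y ≤ _
  rw [coordAvg_singleton]
  rw [integral_congr_ae (.of_forall hindicator),
    integral_indicator_one (Set.toFinite _).measurableSet, measureReal_def, Measure.pi_pi,
    Finset.prod_const, ENNReal.toReal_pow, Finset.card_univ]
  refine pow_le_pow_left₀ ENNReal.toReal_nonneg ?_ _
  exact measureReal_mono (controlSet_mono <|
    Finset.biUnion_subset_biUnion_of_subset_left _ (Finset.erase_subset _ _))

theorem integral_card_rareCoords_le {r : κ → Bool} {δ : ℝ} (hr : ∀ i, (μ i).real {r i} ≤ δ) :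
    ∫ z, ((rareCoords r z).card : ℝ) ∂Measure.pi μ ≤ δ * Fintype.card κ := by
  have hcard : ∀ z, ((rareCoords r z).card : ℝ) =
      ∑ i, ({r i} : Set Bool).indicator (1 : Bool → ℝ) (z i) := fun z => by
    simp [rareCoords, Set.indicator_apply]
  simp only [hcard]
  rw [integral_finsetSum _ fun _ _ => .of_finite]
  calc _ = ∑ i, (μ i).real {r i} := Finset.sum_congr rfl fun i _ => by
        rw [integral_comp_eval (μ := μ) (f := ({r i} : Set Bool).indicator 1) .of_discrete,
          integral_indicator_one (measurableSet_singleton _)]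
    _ ≤ δ * Fintype.card κ := by
        refine (Finset.sum_le_sum fun i _ => hr i).trans_eq ?_
        simp [mul_comm]

/-- The random coalition `S ω`, `ω ∼ ρ`, biases every function into `R`: each has an outcome that
`S ω` forces outside an event of expected probability at most `ε`. The law of `S` does not depend
on the function. -/
def BiasesEveryFunction {ι : Type*} [Fintype ι] {α : ι → Type*} [∀ i, MeasurableSpace (α i)]
    (R : Type*) (μ : ∀ i, Measure (α i)) (ρ : Measure Ω) (S : Ω → Finset ι) (ε : ℝ) : Prop :=
  ∀ f : (∀ i, α i) → R, ∃ b,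
    ∫ ω, (1 - (Measure.pi μ).real (controlSet f (S ω) b)) ∂ρ ≤ ε

/-- The coordinates that are rare in one of the samples `W t b j`. -/
def rareCoalition [DecidableEq κ] (r : κ → Bool) (W : T → R → J → κ → Bool) : Finset κ :=
  Finset.univ.biUnion fun t => rareUnion r Finset.univ (W t)

theorem biasesEveryFunction_rareCoalition [DecidableEq κ] [Nonempty R] (r : κ → Bool) {η : ℝ}
    (hη0 : 0 ≤ η) (hη1 : η ≤ 1)
    (hamplify : 2 * (1 - 1 / (Fintype.card R : ℝ)) ^ Fintype.card T ≤ η)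
    (hη : 1 / 2 ≤ (1 - (1 - η) ^ Fintype.card J) ^ Fintype.card T) :
    BiasesEveryFunction R μ
      (Measure.pi fun _ : T => Measure.pi fun _ : R => Measure.pi fun _ : J => Measure.pi μ)
      (rareCoalition r) (2 * η) := by
  classical
  intro f
  obtain ⟨b, hb⟩ := exists_one_div_card_le_integral_pow (J := J) (μ := μ) f r
  refine ⟨b, (integral_one_sub_biUnion_le
    (u := fun S => (Measure.pi μ).real (controlSet f S b))
    (fun _ _ h => measureReal_mono (controlSet_mono h)) (fun _ => measureReal_nonneg)
    (fun _ => measureReal_le_one) _ hη0 hη1 hη).trans ?_⟩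
  have hpow : (1 - ∫ Y : R → J → κ → Bool,
      (Measure.pi μ).real (controlSet f (rareUnion r Finset.univ Y) b) ^ Fintype.card J
        ∂Measure.pi fun _ => Measure.pi fun _ => Measure.pi μ) ^ Fintype.card T ≤
      (1 - 1 / (Fintype.card R : ℝ)) ^ Fintype.card T := by
    refine pow_le_pow_left₀ (sub_nonneg.2 ?_) (by linarith) _
    refine (integral_mono .of_finite .of_finite fun Y =>
      pow_le_one₀ measureReal_nonneg measureReal_le_one).trans_eq ?_
    simp
  linarith

theorem integral_card_rareCoalition_le [DecidableEq κ] {r : κ → Bool} {δ : ℝ}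
    (hr : ∀ i, (μ i).real {r i} ≤ δ) :
    ∫ W : T → R → J → κ → Bool, ((rareCoalition r W).card : ℝ)
        ∂Measure.pi (fun _ => Measure.pi fun _ => Measure.pi fun _ => Measure.pi μ) ≤
      Fintype.card T * (Fintype.card R * (Fintype.card J * (δ * Fintype.card κ))) := by
  refine (integral_card_biUnion_le _).trans ?_
  gcongr
  refine (integral_card_biUnion_le fun Y : J → κ → Bool =>
    Finset.univ.biUnion fun j => rareCoords r (Y j)).trans ?_
  gcongr
  refine (integral_card_biUnion_le _).trans ?_
  gcongr
  exact integral_card_rareCoords_le hr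

theorem exists_two_mul_pow_le_and_half_le {q η : ℝ} (hq : q < 1) (hη0 : 0 < η) (hη1 : η ≤ 1) :
    ∃ k L : ℕ, 2 * q ^ L ≤ η ∧ 1 / 2 ≤ (1 - (1 - η) ^ k) ^ L := by
  obtain ⟨L, hL⟩ := exists_pow_lt_of_lt_one (half_pos hη0) hq
  obtain ⟨k, hk⟩ := exists_pow_lt_of_lt_one (show 0 < 1 / (2 * ((L : ℝ) + 1)) by positivity)
    (show 1 - η < 1 by linarith)
  refine ⟨k, L, by linarith, ?_⟩
  have h0 : 0 ≤ (1 - η) ^ k := pow_nonneg (by linarith) k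
  have h1 : (1 - η) ^ k ≤ 1 := pow_le_one₀ (by linarith) (by linarith)
  have hbernoulli := one_add_mul_le_pow (show (-2 : ℝ) ≤ -(1 - η) ^ k by linarith) L
  rw [lt_div_iff₀ (by positivity)] at hk
  rw [← sub_eq_add_neg] at hbernoulli
  linarith

end RareCoordinates

section Gluing

variable {ι R Ω : Type*} {α : ι → Type*} {P : ι → Prop}

/-- The union of a coalition among the coordinates satisfying `P` and one among the others. -/
def glueCoalition [DecidableEq ι] (S : Finset {i // P i}) (T : Finset {i // ¬P i}) : Finset ι :=
  S.map (.subtype _) ∪ T.map (.subtype _)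

theorem card_glueCoalition_le [DecidableEq ι] (S : Finset {i // P i})
    (T : Finset {i // ¬P i}) :
    (glueCoalition S T).card ≤ S.card + T.card :=
  (Finset.card_union_le _ _).trans (by simp)

variable [DecidablePred P]

/-- The point of `∀ i, α i` with coordinates `u` where `P` holds and `v` elsewhere. -/
def glue (u : ∀ i : {i // P i}, α i) (v : ∀ i : {i // ¬P i}, α i) (i : ι) : α i :=
  if h : P i then u ⟨i, h⟩ else v ⟨i, h⟩

theorem glue_mem_controlSet [DecidableEq ι] {f : (∀ i, α i) → R} {S : Finset {i // P i}}
    {T : Finset {i // ¬P i}} {u y : ∀ i : {i // P i}, α i} {v : ∀ i : {i // ¬P i}, α i} {b : R}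
    (hy : ∀ j ∉ S, y j = u j) (hv : v ∈ controlSet (fun v => f (glue y v)) T b) :
    glue u v ∈ controlSet f (glueCoalition S T) b := by
  obtain ⟨z, hz, hb⟩ := hv
  refine ⟨glue y z, fun i hi => ?_, hb⟩
  simp only [glueCoalition, Finset.mem_union, Finset.mem_map, not_or] at hi
  by_cases h : P i
  · simpa [glue, h] using hy ⟨i, h⟩ fun hS => hi.1 ⟨_, hS, rfl⟩
  · simpa [glue, h] using hz ⟨i, h⟩ fun hT => hi.2 ⟨_, hT, rfl⟩

variable [Fintype ι] [∀ i, MeasurableSpace (α i)] [∀ i, Finite (α i)]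
  [∀ i, MeasurableSingletonClass (α i)] {μ : ∀ i, Measure (α i)} [∀ i, IsProbabilityMeasure (μ i)]

theorem measureReal_pi_eq_integral_glue (A : Set (∀ i, α i)) :
    (Measure.pi μ).real A = ∫ u : ∀ i : {i // P i}, α i,
      (Measure.pi fun i : {i // ¬P i} => μ i).real {v | glue u v ∈ A}
        ∂Measure.pi fun i : {i // P i} => μ i := by
  have hglue := (measurePreserving_piEquivPiSubtypeProd μ P).symm
  rw [← integral_indicator_one A.toFinite.measurableSet, ← hglue.integral_comp',
    integral_prod _ .of_finite]
  exact integral_congr_ae <| .of_forall fun u =>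
    integral_indicator_one (s := {v | glue u v ∈ A}) (Set.toFinite _).measurableSet

variable [MeasurableSpace Ω] [Finite Ω] [MeasurableSingletonClass Ω] {ρ : Measure Ω}
  [IsProbabilityMeasure ρ]

/- If `S` can force `F u = b` by changing `u` to `y`, it suffices that `T ω` force the outcome
`F y = b` of `v ↦ f (glue y v)`; the law of `T` does not depend on `y`. -/
theorem integral_one_sub_controlSet_glueCoalition_le [DecidableEq ι] {f : (∀ i, α i) → R}
    {F : (∀ i : {i // P i}, α i) → R} {T : Ω → Finset {i // ¬P i}} {ε : ℝ}
    (hF : ∀ u, ∫ ω, (1 - (Measure.pi fun i : {i // ¬P i} => μ i).real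
      (controlSet (fun v => f (glue u v)) (T ω) (F u))) ∂ρ ≤ ε)
    (S : Finset {i // P i}) (b : R) :
    ∫ ω, (1 - (Measure.pi μ).real (controlSet f (glueCoalition S (T ω)) b)) ∂ρ ≤
      1 - (Measure.pi fun i : {i // P i} => μ i).real (controlSet F S b) + ε := by
  set μP := Measure.pi fun i : {i // P i} => μ i
  set μN := Measure.pi fun i : {i // ¬P i} => μ i
  set fail : (∀ i : {i // P i}, α i) → Ω → ℝ := fun u ω =>
    1 - μN.real {v | glue u v ∈ controlSet f (glueCoalition S (T ω)) b} with hfail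
  have hslice : ∀ u, ∫ ω, fail u ω ∂ρ ≤ 1 - (controlSet F S b).indicator 1 u + ε := fun u => by
    have hε : 0 ≤ ε := (integral_nonneg fun ω => sub_nonneg.2 measureReal_le_one).trans (hF u)
    by_cases hu : u ∈ controlSet F S b
    · rw [Set.indicator_of_mem hu, Pi.one_apply, sub_self, zero_add]
      obtain ⟨y, hy, rfl⟩ := hu
      refine (integral_mono .of_finite .of_finite fun ω => ?_).trans (hF y)
      exact sub_le_sub_left (measureReal_mono fun v hv => glue_mem_controlSet hy hv) 1
    · rw [Set.indicator_of_notMem hu, sub_zero]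
      refine (integral_mono (g := fun _ => 1) .of_finite .of_finite fun ω => ?_).trans ?_
      · exact sub_le_self 1 measureReal_nonneg
      · simpa using hε
  calc _ = ∫ ω, ∫ u, fail u ω ∂μP ∂ρ := by
        refine integral_congr_ae (.of_forall fun ω => ?_)
        simp [hfail, integral_sub Integrable.of_finite Integrable.of_finite,
          measureReal_pi_eq_integral_glue (P := P) (μ := μ), μP, μN]
    _ = ∫ u, ∫ ω, fail u ω ∂ρ ∂μP := integral_integral_swap .of_finite
    _ ≤ ∫ u, (1 - (controlSet F S b).indicator 1 u + ε) ∂μP :=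
        integral_mono .of_finite .of_finite hslice
    _ = 1 - μP.real (controlSet F S b) + ε := by
        rw [integral_add .of_finite .of_finite, integral_sub .of_finite .of_finite,
          integral_indicator_one (Set.toFinite _).measurableSet]
        simp

theorem exists_le_and_le_of_integral_le {X Y : Ω → ℝ} (hX : ∀ ω, 0 ≤ X ω) (hY : ∀ ω, 0 ≤ Y ω)
    {a B c : ℝ} (hB : 0 < B) (hc : 0 < c) (hXa : ∫ ω, X ω ∂ρ ≤ a) (hYB : ∫ ω, Y ω ∂ρ ≤ B) :
    ∃ ω, X ω ≤ a + c ∧ Y ω ≤ (a + c) / c * B := by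
  obtain ⟨ω, hω⟩ := exists_le_integral (μ := ρ) (f := fun ω => X ω + c / B * Y ω) .of_finite
  rw [integral_add .of_finite .of_finite, integral_const_mul] at hω
  have hcost : c / B * ∫ ω, Y ω ∂ρ ≤ c := by
    rw [div_mul_eq_mul_div, div_le_iff₀ hB]
    gcongr
  have hpenalty : 0 ≤ c / B * Y ω := mul_nonneg (by positivity) (hY ω)
  refine ⟨ω, by linarith, ?_⟩
  calc Y ω = c / B * Y ω / c * B := by field_simp
    _ ≤ (a + c) / c * B := by
      gcongr
      linarith [hX ω]

theorem exists_controlSet_of_hasLogSobolev_of_biasesEveryFunction [Fintype R] {K : ℝ} (hK1 : 1 ≤ K)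
    (hK : ∀ i, P i → HasLogSobolev (μ i) K) {T : Ω → Finset {i // ¬P i}} {ε B : ℝ} (hε : 0 < ε)
    (hT : BiasesEveryFunction R (fun i : {i // ¬P i} => μ i) ρ T (ε / 4)) (hB : 0 < B)
    (hTB : ∫ ω, ((T ω).card : ℝ) ∂ρ ≤ B) {n : ℕ} (hn : 1 < n) (hcard : Fintype.card ι ≤ n)
    (f : (∀ i, α i) → R) :
    ∃ (b : R) (S : Finset ι),
      (S.card : ℝ) ≤ (Fintype.card R + 2 / ε) / (Real.log n / (4 * K * n)) + 1 + 4 * B ∧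
        1 - ε ≤ (Measure.pi μ).real (controlSet f S b) := by
  classical
  choose F hF using fun u : ∀ i : {i // P i}, α i => hT fun v => f (glue u v)
  obtain ⟨b, hb⟩ := exists_one_div_card_le_measureReal
    (ν := Measure.pi fun i : {i // P i} => μ i) (E := fun b => F ⁻¹' {b}) fun u => ⟨F u, rfl⟩
  obtain ⟨S, hScard, hS⟩ := exists_controlSet_boost hK1 (fun i : {i // P i} => hK i i.2) hn
    ((Fintype.card_subtype_le P).trans hcard)
    (Nat.cast_pos.2 (Fintype.card_pos_iff.2 ⟨b⟩)) (half_pos hε) hb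
  have hfail := integral_one_sub_controlSet_glueCoalition_le hF S b
  obtain ⟨ω, hω, hωcard⟩ := exists_le_and_le_of_integral_le (a := 3 * ε / 4) (c := ε / 4)
    (fun ω => sub_nonneg.2 measureReal_le_one) (fun ω => (T ω).card.cast_nonneg) hB (by positivity)
    (hfail.trans (by linarith)) hTB
  refine ⟨b, glueCoalition S (T ω), ?_, by linarith⟩
  have hunion : ((glueCoalition S (T ω)).card : ℝ) ≤ S.card + (T ω).card := by
    exact_mod_cast card_glueCoalition_le S (T ω)
  have hfour : (3 * ε / 4 + ε / 4) / (ε / 4) = 4 := by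
    field_simp
    norm_num
  rw [one_div_div] at hScard
  rw [hfour] at hωcard
  linarith

end Gluing

section Asymptotics

open Filter Real

theorem exists_controlSet_card_le {ι R : Type*} [Fintype ι] [Fintype R] {μ : ι → Measure Bool}
    [∀ i, IsProbabilityMeasure (μ i)] {δ ε B : ℝ} (hδ0 : 0 < δ) (hδ1 : δ ≤ 1) (hε0 : 0 < ε)
    (hε1 : ε ≤ 1) {k L n : ℕ} (hL : 2 * (1 - 1 / (Fintype.card R : ℝ)) ^ L ≤ ε / 8)
    (hk : 1 / 2 ≤ (1 - (1 - ε / 8) ^ k) ^ L) (hB0 : 0 < B)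
    (hB : L * (Fintype.card R * (k * (δ * n))) ≤ B) (hn : 1 < n) (hcard : Fintype.card ι ≤ n)
    (f : (ι → Bool) → R) :
    ∃ (b : R) (S : Finset ι),
      (S.card : ℝ) ≤
          (Fintype.card R + 2 / ε) / (log n / (4 * logSobolevConst δ * n)) + 1 + 4 * B ∧
        1 - ε ≤ (Measure.pi μ).real (controlSet f S b) := by
  classical
  have : Nonempty R := ⟨f fun _ => true⟩
  set P : ι → Prop := fun i => ∀ a, δ ≤ (μ i).real {a}
  have hrare : ∀ i : {i // ¬P i}, ∃ a, (μ i).real {a} ≤ δ := fun i => by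
    obtain ⟨a, ha⟩ := not_forall.1 i.2
    exact ⟨a, (not_le.1 ha).le⟩
  choose r hr using hrare
  have hbias := biasesEveryFunction_rareCoalition (R := R) (T := Fin L) (J := Fin k)
    (μ := fun i : {i // ¬P i} => μ i) r (η := ε / 8) (by linarith) (by linarith)
    (by simpa using hL) (by simpa using hk)
  rw [show 2 * (ε / 8) = ε / 4 by ring] at hbias
  have hK1 : 1 ≤ logSobolevConst δ := by
    have := log_nonneg ((one_le_div₀ hδ0).2 hδ1)
    rw [logSobolevConst]
    linarith
  refine exists_controlSet_of_hasLogSobolev_of_biasesEveryFunction hK1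
    (fun i hi => hasLogSobolev_of_forall_le_real_singleton hδ0 hi) hε0 hbias hB0
    ((integral_card_rareCoalition_le hr).trans (le_trans ?_ hB)) hn hcard f
  rw [Fintype.card_fin, Fintype.card_fin]
  gcongr
  exact (Fintype.card_subtype_le _).trans hcard

theorem four_mul_logSobolevConst_one_div_le {l : ℝ} (hl : 1 ≤ logb 2 l) :
    4 * logSobolevConst (1 / l) ≤ 80 * logb 2 l * log 2 := by
  have hlog : log l = logb 2 l * log 2 := (div_mul_cancel₀ _ (by positivity)).symm
  rw [logSobolevConst, one_div_one_div, hlog]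
  nlinarith [log_two_gt_d9]

theorem logb_two_natCast_le (n : ℕ) : logb 2 n ≤ n := by
  rcases n.eq_zero_or_pos with rfl | hn
  · simp
  · rw [logb_le_iff_le_rpow one_lt_two (by exact_mod_cast hn), rpow_natCast]
    exact_mod_cast Nat.lt_two_pow_self.le

theorem logb_two_logb_two_natCast_nonneg (n : ℕ) : 0 ≤ logb 2 (logb 2 n) := by
  rcases le_or_gt n 1 with hn | hn
  · interval_cases n <;> simp
  · refine logb_nonneg one_lt_two ?_
    rw [le_logb_iff_rpow_le one_lt_two (by positivity), rpow_one]
    exact_mod_cast hn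

theorem coalition_bound_le {r ε N : ℝ} (hr : 1 ≤ r) (hε : 0 < ε) (hN : 0 ≤ N) {n : ℕ} (hn : 1 < n)
    (hlog : 1 + 4 * N ≤ logb 2 (logb 2 n)) :
    (r + 2 / ε) / (log n / (4 * logSobolevConst (1 / logb 2 n) * n)) + 1 +
        4 * (N * (n / logb 2 n)) ≤
      200 * (r + 1 / ε) * n * logb 2 (logb 2 n) / logb 2 n := by
  set l := logb 2 n
  set ll := logb 2 l
  set q := n / l with hq
  have hl0 : 0 < l := logb_pos one_lt_two (by exact_mod_cast hn)
  have hlogn : log n = l * log 2 := (div_mul_cancel₀ _ (by positivity)).symm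
  have hq1 : 1 ≤ q := (one_le_div₀ hl0).2 (logb_two_natCast_le n)
  have hmain : (r + 2 / ε) / (log n / (4 * logSobolevConst (1 / l) * n)) ≤
      160 * ((r + 1 / ε) * (ll * q)) := calc
    _ = (r + 2 / ε) * (4 * logSobolevConst (1 / l)) / log 2 * q := by
      rw [hlogn, hq]
      field_simp
    _ ≤ (r + 2 / ε) * (80 * ll * log 2) / log 2 * q := by
      gcongr (r + 2 / ε) * ?_ / log 2 * q
      exact four_mul_logSobolevConst_one_div_le (by linarith)
    _ = 80 * (r + 2 * (1 / ε)) * (ll * q) := by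
      field_simp
    _ ≤ 160 * ((r + 1 / ε) * (ll * q)) := by
      nlinarith [mul_nonneg (show 0 ≤ ll by linarith) (show 0 ≤ q by linarith)]
  have hlower : 1 + 4 * (N * q) ≤ (r + 1 / ε) * (ll * q) := calc
    1 + 4 * (N * q) ≤ (1 + 4 * N) * q := by linarith
    _ ≤ ll * q := by gcongr
    _ ≤ (r + 1 / ε) * (ll * q) :=
      le_mul_of_one_le_left (mul_nonneg (by linarith) (by linarith))
        (by linarith [one_div_pos.2 hε])
  have hbound : 200 * (r + 1 / ε) * n * ll / l = 200 * ((r + 1 / ε) * (ll * q)) := by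
    rw [hq]
    ring
  rw [hbound]
  linarith [mul_nonneg hN (show 0 ≤ q by linarith)]

theorem single_round_general_range_general {ε : ℝ} (hε0 : 0 < ε) (hε1 : ε ≤ 1) {r : ℕ}
    (hr : 0 < r) :
    ∀ᶠ n : ℕ in atTop, ∀ (ι R : Type*) [Fintype ι] [Fintype R],
      Fintype.card ι ≤ n → Fintype.card R = r →
      ∀ μ : ι → Measure Bool, (∀ i, IsProbabilityMeasure (μ i)) → ∀ f : (ι → Bool) → R,
      ∃ (b : R) (S : Finset ι),
        (S.card : ℝ) ≤ 200 * (r + 1 / ε) * n * logb 2 (logb 2 n) / logb 2 n ∧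
          1 - ε ≤ infl (Measure.pi μ) f S b := by
  obtain ⟨k, L, hL, hk⟩ := exists_two_mul_pow_le_and_half_le
    (q := 1 - 1 / (r : ℝ)) (sub_lt_self 1 (by positivity)) (show 0 < ε / 8 by positivity)
    (by linarith)
  set N : ℝ := L * r * k + 1 with hN
  have hlogb : Tendsto (fun n : ℕ => logb 2 (n : ℝ)) atTop atTop :=
    (tendsto_logb_atTop one_lt_two).comp tendsto_natCast_atTop_atTop
  filter_upwards [eventually_gt_atTop 1, hlogb.eventually_ge_atTop 1,
    ((tendsto_logb_atTop one_lt_two).comp hlogb).eventually_ge_atTop (1 + 4 * N)]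
    with n hn hl hll ι R _ _ hcard hR μ _ f
  have hl0 : 0 < logb 2 n := by linarith
  subst hR
  obtain ⟨b, S, hS, hb⟩ := exists_controlSet_card_le (μ := μ) (one_div_pos.2 hl0)
    ((div_le_one hl0).2 hl) hε0 hε1 hL hk (B := N * (n / logb 2 n)) (by positivity)
    (by
      rw [one_div_mul_eq_div, ← mul_assoc, ← mul_assoc]
      gcongr
      linarith) hn hcard f
  exact ⟨b, S, hS.trans (coalition_bound_le (by exact_mod_cast hr) hε0 (by positivity) hn hll), hb⟩

theorem natCast_add_one_div_le {r : ℕ} (hr : 2 ≤ r) {ε : ℝ} (hε0 : 0 < ε) (hε1 : ε ≤ 1) {m : ℕ}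
    (hm : logb 2 r ≤ m) :
    r + 1 / ε ≤ (m : ℝ) ^ 3 * logb 2 (m / ε) / ε ^ 2 + 1 / ε + 2 ^ m := by
  have hr2 : (2 : ℝ) ≤ r := by exact_mod_cast hr
  have hrm : (r : ℝ) ≤ 2 ^ m := by
    simpa using (logb_le_iff_le_rpow one_lt_two (by linarith)).1 hm
  have hm1 : 1 ≤ (m : ℝ) := by
    refine le_trans ?_ hm
    rw [le_logb_iff_rpow_le one_lt_two (by linarith), rpow_one]
    exact hr2
  have hlog : 0 ≤ logb 2 (m / ε) :=
    logb_nonneg one_lt_two ((one_le_div₀ hε0).2 (hε1.trans hm1))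
  have hterm : 0 ≤ (m : ℝ) ^ 3 * logb 2 (m / ε) / ε ^ 2 := by positivity
  linarith

end Asymptotics

/-- single round, general range: for a finite range `R` with `|R| ≥ 2`, setting
`m = ⌈log |R|⌉` and `C = C'·(m³·log(m/ε)/ε² + 1/ε + 2^m)`, for all sufficiently large `n`
(depending on `ε` and `|R|`), over any product measure on `{0,1}^n` any `f : {0,1}^n → R`
can be biased towards some `b ∈ R` by a coalition of at most `C·n·loglog n/log n` players. -/
theorem single_round_general_range :
    ∃ C' : ℝ, C' > 0 ∧
      ∀ ε : ℝ, 0 < ε → ε ≤ 1/2 →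
      ∀ cardR : ℕ, 2 ≤ cardR →
      ∃ n₀ : ℕ, ∀ n : ℕ, n₀ ≤ n →
      ∀ (R : Type), ∀ (_ : Fintype R), Fintype.card R = cardR →
      ∀ μs : Fin n → Measure Bool, (∀ i, IsProbabilityMeasure (μs i)) →
      ∀ f : (Fin n → Bool) → R,
      ∀ m : ℕ, m = ⌈Real.logb 2 (cardR : ℝ)⌉₊ →
      ∀ C : ℝ, C = C' * ((m : ℝ)^3 * Real.logb 2 ((m : ℝ)/ε) / ε^2 + 1/ε + 2^m) →
      ∃ (b : R) (S : Finset (Fin n)),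
        (S.card : ℝ) ≤ C * n * Real.logb 2 (Real.logb 2 n) / Real.logb 2 n ∧
        infl (Measure.pi μs) f S b ≥ 1 - ε := by
  refine ⟨200, by norm_num, fun ε hε0 hε1 r hr => ?_⟩
  have hε : ε ≤ 1 := by linarith
  obtain ⟨n₀, hn₀⟩ := Filter.eventually_atTop.1 <|
    single_round_general_range_general hε0 hε (r := r) (by omega)
  refine ⟨n₀, fun n hn R _ hR μs hμ f m hm C hC => ?_⟩
  obtain ⟨b, S, hS, hb⟩ := hn₀ n hn (Fin n) R (Fintype.card_fin n).le hR μs hμ f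
  refine ⟨b, S, hS.trans ?_, hb⟩
  have hC' := natCast_add_one_div_le hr hε0 hε (hm ▸ Nat.le_ceil (Real.logb 2 r))
  have hlog := logb_two_logb_two_natCast_nonneg n
  rw [hC]
  gcongr
  exact div_nonneg (Real.log_natCast_nonneg n) (Real.log_nonneg one_le_two)
end
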